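/- Let M = {F = 0} be a germ of an irreducible singular real-analytic Levi-flat hypersurface at 0 ∈ ℂⁿ, n ≥ 3, with F(z) = Re(z₁ ⋯ zₙ) + H(z, z̄), where H(z, z̄) = O(|z|^{n+1}) and H(z, z̄) = conj(H(z̄, z)). Suppose Sing(M_ℂ) equals the union over all 1 ≤ i < j ≤ n and 1 ≤ k < ℓ ≤ n of V_{ijkℓ} = {(z,w) ∈ ℂⁿ × ℂⁿ : z_i = z_j = w_k = w_ℓ = 0}, and that Sing(M_ℂ) is contained in the closure of Sing(L_ℂ). Then the complexified Levi foliation L_ℂ admits a non-constant holomorphic first integral: there exists a germ of holomorphic function h at 0 ∈ ℂ^{2n}, non-constant along M_ℂ, such that for every p ∈ M*_ℂ the 2-form dh(p) ∧ α(p) vanishes on pairs of vectors in T_p M_ℂ. -/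

import Mathlib

/-!
Write `g(z, w) = 2 s⁻ⁿ F_ℂ(sz, sw)` for small `s > 0`. By `complexification_isBigO` this is a small
perturbation of `z₁⋯zₙ + w₁⋯wₙ` on a large ball, which `ScaledLevi` records together with reality
and the Levi condition on `w = z̄` (`levi_complexification`, `eventually_scaledLevi`).

The leaves of the Levi foliation should be the slices `{z : h(z) = c}` of the hypersurface. To find
`h`, solve `g(b, (u, x)) = 0` for the first coordinate `u` of `w` as a holomorphic function `κ(b, x)`,
where `x` runs over a polyannulus (`exists_kappa`). The Levi condition holds at real points of the
hypersurface. Since `w = z̄` is maximal totally real, it extends to all `(b, κ(b, x), x)` with `b₀`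
near `i` (`levi_zero`). It says that the ratios of the components of `∂_z g` along the zero set do
not change with `x` (`ratio_const`), so they agree with the ratios at `x = (1, …, 1)`. There they
are the ratios of the components of `dh` for `h(b) = κ(b, (1, …, 1))`, by implicit differentiation.
Thus `dh ∧ ∂_z g = 0` on an open part of the zero set (`wedge_zero`).

The remaining point is to reach the zeros near the origin, which lie outside the polyannulus.
Restrict `g` to the lines `t ↦ (b, (t, t + y'))`. For `b` in a fixed ball and `y'` small, the zeros
with `|t| ≤ 3` do not meet `|t| = 3`. For `b` near `(i, 1, …, 1)` they are simple and lie in the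
annulus, as `g` is close to `tⁿ + i`. There the coefficients of `dh ∧ ∂_z g` are divisible by `g`,
with the quotient given by a Cauchy integral over `|t| = 3` that makes sense for all `(b, y')`; by
analytic continuation they vanish on every zero of `g` (`division_extend`, `exists_integral`).
Finally `dh ≠ 0` somewhere, and `{F_ℂ = 0}` projects onto a neighbourhood of `0` in the `z`-space
(`exists_zero_above`), so `h` is not constant along the hypersurface.
-/

open Filter Topology

/-- Wirtinger derivative ∂/∂z_j of a (complex-valued) function at `p`:
`(1/2)(∂F/∂x_j − i ∂F/∂y_j)`. -/
noncomputable def wirtZ {n : ℕ} (F : (Fin n → ℂ) → ℂ) (j : Fin n) (p : Fin n → ℂ) : ℂ :=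
  (fderiv ℝ F p (Pi.single j 1) - Complex.I * fderiv ℝ F p (Pi.single j Complex.I)) / 2

/-- Wirtinger derivative ∂/∂z̄_j of a (complex-valued) function at `p`:
`(1/2)(∂F/∂x_j + i ∂F/∂y_j)`. -/
noncomputable def wirtZbar {n : ℕ} (F : (Fin n → ℂ) → ℂ) (j : Fin n) (p : Fin n → ℂ) : ℂ :=
  (fderiv ℝ F p (Pi.single j 1) + Complex.I * fderiv ℝ F p (Pi.single j Complex.I)) / 2

/-- The germ `M = {F = 0}` at `0` is Levi-flat: for every point `p` of `M* = M \ Sing(M)`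
near `0` and every `v` with `Σ_j F_{z_j}(p) v_j = 0` one has
`Σ_{i,j} F_{z_i z̄_j}(p) v_i conj(v_j) = 0`. -/
def LeviFlatGerm {n : ℕ} (F : (Fin n → ℂ) → ℝ) : Prop :=
  ∀ᶠ p in 𝓝 (0 : Fin n → ℂ), F p = 0 → fderiv ℝ F p ≠ 0 →
    ∀ v : Fin n → ℂ,
      (∑ j, wirtZ (fun z => ((F z : ℝ) : ℂ)) j p * v j) = 0 →
      (∑ i, ∑ j, wirtZbar (wirtZ (fun z => ((F z : ℝ) : ℂ)) i) j p * v i * (starRingEnd ℂ) (v j)) = 0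

/-- `F` is irreducible in the ring of germs at `0` of real-valued real-analytic functions:
in any factorization `F = g·h` one of the factors is a unit (i.e. does not vanish at `0`). -/
def IrreducibleRGerm {n : ℕ} (F : (Fin n → ℂ) → ℝ) : Prop :=
  ∀ g h : (Fin n → ℂ) → ℝ, AnalyticAt ℝ g 0 → AnalyticAt ℝ h 0 →
    (∀ᶠ z in 𝓝 (0 : Fin n → ℂ), F z = g z * h z) → g 0 ≠ 0 ∨ h 0 ≠ 0

/-- `φ` is a germ of biholomorphism `(ℂⁿ,0) → (ℂⁿ,0)` with local inverse `ι`. -/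
def IsGermBiholo {n : ℕ} (φ ι : (Fin n → ℂ) → (Fin n → ℂ)) : Prop :=
  AnalyticAt ℂ φ 0 ∧ AnalyticAt ℂ ι 0 ∧ φ 0 = 0 ∧ ι 0 = 0 ∧
  (∀ᶠ z in 𝓝 (0 : Fin n → ℂ), ι (φ z) = z) ∧ (∀ᶠ z in 𝓝 (0 : Fin n → ℂ), φ (ι z) = z)

/-- `φ` is volume-preserving (isochore): the determinant of its complex Jacobian is
identically `1` near `0`. -/
def IsVolumePreserving {n : ℕ} (φ : (Fin n → ℂ) → (Fin n → ℂ)) : Prop :=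
  ∀ᶠ z in 𝓝 (0 : Fin n → ℂ), LinearMap.det ((fderiv ℂ φ z).toLinearMap) = 1

/-- `ψ` is a germ of automorphism of `(ℂ,0)`. -/
def IsGermAuto (ψ : ℂ → ℂ) : Prop :=
  AnalyticAt ℂ ψ 0 ∧ ψ 0 = 0 ∧ deriv ψ 0 ≠ 0

/-- `FC` is the complexification of `F`: the (unique) germ of holomorphic function at
`0 ∈ ℂⁿ × ℂⁿ` such that `FC (z, z̄) = F z` near `0`. -/
def IsComplexification {n : ℕ} (F : (Fin n → ℂ) → ℝ)
    (FC : ((Fin n → ℂ) × (Fin n → ℂ)) → ℂ) : Prop :=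
  AnalyticAt ℂ FC 0 ∧ ∀ᶠ z in 𝓝 (0 : Fin n → ℂ), FC (z, star z) = ((F z : ℝ) : ℂ)

/-- The singular set `Sing(M_ℂ) = {F_ℂ = 0} ∩ {dF_ℂ = 0}` of the complexification. -/
def singMC {n : ℕ} (FC : ((Fin n → ℂ) × (Fin n → ℂ)) → ℂ) :
    Set ((Fin n → ℂ) × (Fin n → ℂ)) :=
  {p | FC p = 0 ∧ fderiv ℂ FC p = 0}

/-- The singular set of the complexified Levi foliation `L_ℂ`: points of
`M*_ℂ` at which `α = Σ_j (∂F_ℂ/∂z_j) dz_j` vanishes on `T_p M_ℂ = ker dF_ℂ(p)`.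
Note that `α(p)(v) = dF_ℂ(p)(v₁, 0)`. -/
def singLC {n : ℕ} (FC : ((Fin n → ℂ) × (Fin n → ℂ)) → ℂ) :
    Set ((Fin n → ℂ) × (Fin n → ℂ)) :=
  {p | FC p = 0 ∧ fderiv ℂ FC p ≠ 0 ∧
    ∀ v : (Fin n → ℂ) × (Fin n → ℂ), fderiv ℂ FC p v = 0 → fderiv ℂ FC p (v.1, 0) = 0}

/-! ### Totally real subspaces and Cauchy integrals -/

/-- If `K(z, z̄) = O(|z|ᵏ)`, then the homogeneous parts of `K` of degree below `k` vanish: they vanish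
on the totally real subspace `w = z̄`, and every vector is `a + i b` with `a`, `b` in that subspace. -/
lemma diag_coeff_eq_zero {m : ℕ} {K : (Fin m → ℂ) × (Fin m → ℂ) → ℂ}
    {p : FormalMultilinearSeries ℂ ((Fin m → ℂ) × (Fin m → ℂ)) ℂ}
    (hK : HasFPowerSeriesAt K p 0) (k : ℕ)
    (h : (fun z : Fin m → ℂ => K (z, star z)) =O[𝓝 0] fun z => ‖z‖ ^ k) :
    ∀ j < k, ∀ v, p j (fun _ => v) = 0 := by
  intro j
  induction j using Nat.strong_induction_on with
  | _ j ih =>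
  intro hj
  have hps : ∀ y, p.partialSum (j + 1) y = p j (fun _ => y) := by
    intro y
    rw [FormalMultilinearSeries.partialSum, Finset.sum_range_succ, Finset.sum_eq_zero, zero_add]
    intro i hi
    have := Finset.mem_range.1 hi
    exact ih i this (by omega) y
  have hO := hK.isBigO_sub_partialSum_pow (j + 1)
  simp only [hps, zero_add] at hO
  -- the coefficient vanishes on the totally real subspace
  have hreal : ∀ z : Fin m → ℂ, p j (fun _ => (z, star z)) = 0 := by
    intro z
    have ht : Tendsto (fun l : ℝ => ((l : ℂ) • (z, star z) : (Fin m → ℂ) × (Fin m → ℂ)))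
        (𝓝 0) (𝓝 0) := by
      have : Continuous (fun l : ℝ => ((l : ℂ) • (z, star z) : (Fin m → ℂ) × (Fin m → ℂ))) := by
        fun_prop
      simpa using this.tendsto 0
    have ht' : Tendsto (fun l : ℝ => ((l : ℂ) • z)) (𝓝 0) (𝓝 0) := by
      have : Continuous (fun l : ℝ => ((l : ℂ) • z)) := by fun_prop
      simpa using this.tendsto 0
    have h1 := hO.comp_tendsto ht
    have h2 := h.comp_tendsto ht'
    have hs : ∀ l : ℝ, K ((l : ℂ) • z, star ((l : ℂ) • z)) = K ((l : ℂ) • (z, star z)) := by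
      intro l; simp [star_smul]
    have h1' : (fun l : ℝ => K ((l : ℂ) • (z, star z)) - (l : ℂ) ^ j * p j (fun _ => (z, star z)))
        =O[𝓝 0] fun l : ℝ => l ^ (j + 1) := by
      refine (h1.congr_left ?_).trans ?_
      · intro l
        simp only [Function.comp]
        rw [ContinuousMultilinearMap.map_smul_univ]
        simp
      · refine Asymptotics.IsBigO.of_bound (‖((z, star z) : (Fin m → ℂ) × (Fin m → ℂ))‖ ^ (j + 1))
          (Eventually.of_forall fun l => ?_)
        simp only [Function.comp, norm_smul, norm_pow, norm_mul, norm_norm, mul_pow,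
          Complex.norm_real]
        exact le_of_eq (mul_comm _ _)
    have h2' : (fun l : ℝ => K ((l : ℂ) • (z, star z))) =O[𝓝 0] fun l : ℝ => l ^ (j + 1) := by
      have e1 : (fun l : ℝ => K ((l : ℂ) • (z, star z))) =O[𝓝 0] fun l : ℝ => l ^ k := by
        refine (h2.congr_left ?_).trans ?_
        · intro l; simp only [Function.comp]; exact hs l
        · refine Asymptotics.IsBigO.of_bound (‖z‖ ^ k)
            (Eventually.of_forall fun l => ?_)
          simp only [Function.comp, norm_smul, norm_pow, norm_mul, norm_norm, mul_pow,
            Complex.norm_real]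
          exact le_of_eq (mul_comm _ _)
      refine e1.trans (Asymptotics.IsBigO.of_bound 1 ?_)
      filter_upwards [Metric.ball_mem_nhds (0 : ℝ) one_pos] with l hl
      rw [norm_pow, norm_pow, one_mul]
      exact pow_le_pow_of_le_one (norm_nonneg _) (mem_ball_zero_iff.1 hl).le hj
    have h3 : (fun l : ℝ => (l : ℂ) ^ j * p j (fun _ => (z, star z)))
        =O[𝓝 0] fun l : ℝ => l ^ (j + 1) := by
      refine (h2'.sub h1').congr_left fun l => by ring
    by_contra hne
    obtain ⟨C, hC⟩ := h3.bound
    have h4 : ∀ᶠ l : ℝ in 𝓝[>] 0, ‖p j (fun _ => (z, star z))‖ ≤ C * l := by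
      filter_upwards [hC.filter_mono nhdsWithin_le_nhds, self_mem_nhdsWithin] with l hl hl0
      have hl0' : 0 < l := hl0
      simp only [norm_mul, norm_pow, Complex.norm_real, Real.norm_eq_abs, abs_of_pos hl0'] at hl
      have : l ^ j * ‖p j (fun _ => (z, star z))‖ ≤ l ^ j * (C * l) := by
        calc _ ≤ _ := hl
          _ = _ := by ring
      exact le_of_mul_le_mul_left this (by positivity)
    have h5 : Tendsto (fun l : ℝ => C * l) (𝓝[>] 0) (𝓝 0) := by
      have : Continuous (fun l : ℝ => C * l) := by fun_prop
      simpa using (this.tendsto 0).mono_left nhdsWithin_le_nhds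
    have h6 := le_of_tendsto_of_tendsto tendsto_const_nhds h5 h4
    exact hne (norm_le_zero_iff.1 h6)
  intro v
  -- every vector is `a + i b` with `a, b` in the totally real subspace
  set a : Fin m → ℂ := (1 / 2 : ℂ) • (v.1 + star v.2) with ha
  set b : Fin m → ℂ := (-Complex.I / 2 : ℂ) • (v.1 - star v.2) with hb
  have hv : v = (a, star a) + Complex.I • (b, star b) := by
    ext i
    · simp [ha, hb]
      linear_combination (1 / 2 : ℂ) * (v.1 i - (starRingEnd ℂ) (v.2 i)) * Complex.I_sq
    · simp [ha, hb]
      linear_combination (-1 / 2 : ℂ) * ((starRingEnd ℂ) (v.1 i) - (v.2 i)) * Complex.I_sq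
  have hanal : AnalyticOnNhd ℂ
      (fun l : ℂ => p j (fun _ => ((a, star a) + l • (b, star b) :
        (Fin m → ℂ) × (Fin m → ℂ)))) Set.univ := by
    intro l _
    have h1 : AnalyticAt ℂ (fun y : (Fin m → ℂ) × (Fin m → ℂ) => p j (fun _ => y))
        ((a, star a) + l • (b, star b)) := by
      exact ((p j).analyticAt).comp (g := fun w => p j w)
        (AnalyticAt.pi fun _ => analyticAt_id)
    exact AnalyticAt.fun_comp
      (g := fun y : (Fin m → ℂ) × (Fin m → ℂ) => p j (fun _ => y)) h1 (by fun_prop)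
  have hfreq : ∃ᶠ l : ℂ in 𝓝[≠] 0, p j (fun _ => ((a, star a) + l • (b, star b) :
        (Fin m → ℂ) × (Fin m → ℂ))) = 0 := by
    have ht : Tendsto (fun r : ℝ => (r : ℂ)) (𝓝[>] 0) (𝓝[≠] 0) := by
      refine tendsto_nhdsWithin_iff.2 ⟨?_, ?_⟩
      · have : Continuous (fun r : ℝ => (r : ℂ)) := by fun_prop
        simpa using (this.tendsto 0).mono_left nhdsWithin_le_nhds
      · filter_upwards [self_mem_nhdsWithin] with r hr
        have hr' : 0 < r := hr
        simpa using hr'.ne'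
    refine ht.frequently (Eventually.of_forall fun r => ?_).frequently
    have := hreal (a + (r : ℂ) • b)
    simpa [star_smul] using this
  have := hanal.eqOn_zero_of_preconnected_of_frequently_eq_zero isPreconnected_univ
    (Set.mem_univ 0) hfreq (Set.mem_univ Complex.I)
  rw [hv]
  exact this

/-- The order of vanishing of a holomorphic germ can be read off on the subspace `w = z̄`. -/
lemma isBigO_of_totallyReal {m : ℕ} {K : (Fin m → ℂ) × (Fin m → ℂ) → ℂ}
    (hK : AnalyticAt ℂ K 0) (k : ℕ)
    (h : (fun z : Fin m → ℂ => K (z, star z)) =O[𝓝 0] fun z => ‖z‖ ^ k) :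
    K =O[𝓝 0] fun q => ‖q‖ ^ k := by
  obtain ⟨p, hp⟩ := hK
  have h0 := diag_coeff_eq_zero hp k h
  have hO := hp.isBigO_sub_partialSum_pow k
  refine hO.congr_left fun y => ?_
  rw [FormalMultilinearSeries.partialSum, Finset.sum_eq_zero]
  · simp
  · intro i hi
    exact h0 i (Finset.mem_range.1 hi) y

/-- Identity theorem for the maximal totally real subspace `w = z̄`. -/
lemma eventually_zero_of_totallyReal {m : ℕ} {K : (Fin m → ℂ) × (Fin m → ℂ) → ℂ}
    {q : Fin m → ℂ} (hK : AnalyticAt ℂ K (q, star q))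
    (h : ∀ᶠ z in 𝓝 q, K (z, star z) = 0) :
    ∀ᶠ y in 𝓝 (q, star q), K y = 0 := by
  have hK' : AnalyticAt ℂ (fun y => K (y + (q, star q))) 0 := by
    refine AnalyticAt.fun_comp (g := K) ?_ (by fun_prop)
    simpa using hK
  obtain ⟨p, hp⟩ := hK'
  have hsh : ∀ᶠ z in 𝓝 (0 : Fin m → ℂ), K ((z, star z) + (q, star q)) = 0 := by
    have : Tendsto (fun z : Fin m → ℂ => z + q) (𝓝 0) (𝓝 q) := by
      have : Continuous (fun z : Fin m → ℂ => z + q) := by fun_prop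
      simpa using this.tendsto 0
    filter_upwards [this.eventually h] with z hz
    simpa using hz
  have h0 : ∀ j v, p j (fun _ => v) = 0 := by
    intro j
    refine diag_coeff_eq_zero hp (j + 1) ?_ j (Nat.lt_succ_self j)
    refine Asymptotics.IsBigO.of_bound 1 ?_
    filter_upwards [hsh] with z hz
    rw [hz]; simp
  have h1 : ∀ᶠ y in 𝓝 (0 : (Fin m → ℂ) × (Fin m → ℂ)), K (y + (q, star q)) = 0 := by
    filter_upwards [hp.eventually_hasSum] with y hy
    simp only [zero_add, h0] at hy
    exact hy.unique hasSum_zero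
  have h2 : Tendsto (fun y : (Fin m → ℂ) × (Fin m → ℂ) => y - (q, star q))
      (𝓝 (q, star q)) (𝓝 0) := by
    have : Continuous (fun y : (Fin m → ℂ) × (Fin m → ℂ) => y - (q, star q)) := by fun_prop
    simpa using this.tendsto (q, star q)
  filter_upwards [h2.eventually h1] with y hy
  simpa using hy

lemma differentiableOn_circleIntegral_param {f : ℂ × ℂ → ℂ} {V : Set ℂ} (hV : IsOpen V) {R : ℝ}
    (hR : 0 ≤ R)
    (hf : AnalyticOnNhd ℂ f (V ×ˢ Metric.sphere 0 R)) :
    DifferentiableOn ℂ (fun l => ∮ t in C(0, R), f (l, t)) V := by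
  intro l₀ hl₀
  obtain ⟨ε, hε, hεV⟩ := Metric.nhds_basis_closedBall.mem_iff.1 (hV.mem_nhds hl₀)
  have hcm : ∀ θ : ℝ, circleMap 0 R θ ∈ Metric.sphere (0 : ℂ) R := fun θ =>
    circleMap_mem_sphere 0 hR θ
  have hdc : Continuous (fun θ : ℝ => deriv (circleMap 0 R) θ) := by
    simp only [deriv_circleMap]
    fun_prop
  have hcont : ContinuousOn (fun x => fderiv ℂ f x (1, 0)) (V ×ˢ Metric.sphere 0 R) := by
    intro x hx
    exact ((hf x hx).fderiv.continuousAt.clm_apply continuousAt_const).continuousWithinAt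
  have hK : IsCompact (Metric.closedBall l₀ ε ×ˢ Metric.sphere (0 : ℂ) R) :=
    (isCompact_closedBall _ _).prod (isCompact_sphere _ _)
  obtain ⟨C, hC⟩ := hK.exists_bound_of_continuousOn
    (hcont.mono (Set.prod_mono hεV le_rfl))
  have key := intervalIntegral.hasDerivAt_integral_of_dominated_loc_of_deriv_le
    (μ := MeasureTheory.volume) (a := 0) (b := 2 * Real.pi)
    (F := fun l θ => deriv (circleMap 0 R) θ • f (l, circleMap 0 R θ))
    (F' := fun l θ => deriv (circleMap 0 R) θ • fderiv ℂ f (l, circleMap 0 R θ) (1, 0))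
    (x₀ := l₀) (s := Metric.closedBall l₀ ε) (bound := fun _ => |R| * C)
    (Metric.closedBall_mem_nhds _ hε) ?_ ?_ ?_ ?_ ?_ ?_
  · exact key.2.differentiableAt.differentiableWithinAt
  · filter_upwards [hV.mem_nhds hl₀] with l hl
    refine Continuous.aestronglyMeasurable ?_
    rw [continuous_iff_continuousAt]
    intro θ
    refine ContinuousAt.smul hdc.continuousAt ?_
    exact ContinuousAt.comp (f := fun θ : ℝ => (l, circleMap 0 R θ)) (hf (l, circleMap 0 R θ) ⟨hl, hcm θ⟩).continuousAt (by fun_prop)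
  · refine Continuous.intervalIntegrable ?_ _ _
    rw [continuous_iff_continuousAt]
    intro θ
    refine ContinuousAt.smul hdc.continuousAt ?_
    exact ContinuousAt.comp (f := fun θ : ℝ => (l₀, circleMap 0 R θ))
      (hf (l₀, circleMap 0 R θ) ⟨hl₀, hcm θ⟩).continuousAt (by fun_prop)
  · refine Continuous.aestronglyMeasurable ?_
    rw [continuous_iff_continuousAt]
    intro θ
    refine ContinuousAt.smul hdc.continuousAt ?_
    refine ContinuousAt.clm_apply ?_ continuousAt_const
    exact ContinuousAt.comp (f := fun θ : ℝ => (l₀, circleMap 0 R θ))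
      (hf (l₀, circleMap 0 R θ) ⟨hl₀, hcm θ⟩).fderiv.continuousAt (by fun_prop)
  · refine Eventually.of_forall fun θ _ l hl => ?_
    rw [norm_smul]
    refine mul_le_mul ?_ (hC _ ⟨hl, hcm θ⟩) (norm_nonneg _) (abs_nonneg _)
    simp [deriv_circleMap]
  · exact intervalIntegrable_const
  · refine Eventually.of_forall fun θ _ l hl => ?_
    have h1 := (hf (l, circleMap 0 R θ) ⟨hεV hl, hcm θ⟩).differentiableAt.hasFDerivAt
    have h2 : HasDerivAt (fun l : ℂ => (l, circleMap 0 R θ)) ((1 : ℂ), (0 : ℂ)) l :=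
      (hasDerivAt_id l).prodMk (hasDerivAt_const l _)
    exact (h1.comp_hasDerivAt l h2).const_smul (deriv (circleMap 0 R) θ)

/-- If `D` vanishes at the zeros of `g` and these are simple, then `D / g` extends holomorphically, so
that Cauchy's formula expresses `D / g` by its values on the circle. -/
lemma cauchy_division {D g : ℂ → ℂ} {R : ℝ}
    (hD : AnalyticOnNhd ℂ D (Metric.closedBall 0 R)) (hg : AnalyticOnNhd ℂ g (Metric.closedBall 0 R))
    (hz : ∀ t ∈ Metric.closedBall (0 : ℂ) R, g t = 0 → D t = 0 ∧ deriv g t ≠ 0)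
    (hs : ∀ t ∈ Metric.sphere (0 : ℂ) R, g t ≠ 0)
    {t : ℂ} (ht : t ∈ Metric.ball (0 : ℂ) R) :
    (2 * Real.pi * Complex.I : ℂ) * D t = g t * ∮ τ in C(0, R), (τ - t)⁻¹ * (D τ / g τ) := by
  classical
  have htc := Metric.ball_subset_closedBall ht
  by_cases hgt : g t = 0
  · rw [hgt, (hz t htc hgt).1]; simp
  set q : ℂ → ℂ := fun τ => if g τ = 0 then deriv D τ / deriv g τ else D τ / g τ with hq
  have hqd : ∀ a ∈ Metric.closedBall (0 : ℂ) R, DifferentiableAt ℂ q a := by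
    intro a ha
    by_cases hga : g a = 0
    · obtain ⟨hDa, hga'⟩ := hz a ha hga
      have hds : ∀ f : ℂ → ℂ, AnalyticAt ℂ f a → AnalyticAt ℂ (dslope f a) a := by
        intro f hf
        obtain ⟨p, hp⟩ := hf
        exact hp.has_fpower_series_dslope_fslope.analyticAt
      have h1 := hds D (hD a ha)
      have h2 := hds g (hg a ha)
      have h20 : dslope g a a ≠ 0 := by rwa [dslope_same]
      have hqe : q =ᶠ[𝓝 a] fun τ => dslope D a τ / dslope g a τ := by
        filter_upwards [h2.continuousAt.eventually_ne h20] with τ hτ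
        by_cases hτa : τ = a
        · subst hτa
          simp [hq, hga]
        · have e1 : D τ = (τ - a) * dslope D a τ := by
            have := sub_smul_dslope D a τ
            rw [hDa, sub_zero, smul_eq_mul] at this
            exact this.symm
          have e2 : g τ = (τ - a) * dslope g a τ := by
            have := sub_smul_dslope g a τ
            rw [hga, sub_zero, smul_eq_mul] at this
            exact this.symm
          have h3 : τ - a ≠ 0 := sub_ne_zero.2 hτa
          have h4 : g τ ≠ 0 := by rw [e2]; exact mul_ne_zero h3 hτ
          simp only [hq, h4, if_false]
          rw [e1, e2, mul_div_mul_left _ _ h3]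
      exact (h1.differentiableAt.div h2.differentiableAt h20).congr_of_eventuallyEq hqe
    · have hqe : q =ᶠ[𝓝 a] fun τ => D τ / g τ := by
        filter_upwards [(hg a ha).continuousAt.eventually_ne hga] with τ hτ
        simp [hq, hτ]
      exact ((hD a ha).differentiableAt.div (hg a ha).differentiableAt hga).congr_of_eventuallyEq hqe
  have hR : 0 < R := by
    have := Metric.pos_of_mem_ball ht; exact this
  have hdc : DiffContOnCl ℂ q (Metric.ball 0 R) := by
    refine DifferentiableOn.diffContOnCl ?_
    rw [closure_ball _ hR.ne']
    exact fun a ha => (hqd a ha).differentiableWithinAt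
  have hc := hdc.circleIntegral_sub_inv_smul ht
  have he : (∮ τ in C(0, R), (τ - t)⁻¹ * (D τ / g τ)) = ∮ τ in C(0, R), (τ - t)⁻¹ • q τ := by
    refine circleIntegral.integral_congr hR.le fun τ hτ => ?_
    simp [hq, hs τ hτ]
  rw [he, hc]
  have : q t = D t / g t := by simp [hq, hgt]
  rw [this, smul_eq_mul]
  field_simp

/-! ### The rescaled hypersurface -/

/-- Properties of the rescaled complexification `g(z, w) = 2 s⁻ⁿ F_ℂ(sz, sw)`, with `n = m + 1`, for
small `s > 0`: on a ball whose radius exceeds `4ⁿ` it is holomorphic and close to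
`∏ zᵢ + ∏ wᵢ`, it is real on `w = z̄`, and it satisfies the Levi condition at the points of
`w = z̄` where `g = 0` and `∂_z g ≠ 0`. -/
structure ScaledLevi (m : ℕ) (g : (Fin (m + 1) → ℂ) × (Fin (m + 1) → ℂ) → ℂ) : Prop where
  analytic : AnalyticOnNhd ℂ g (Metric.ball 0 (4 ^ (m + 1) + 2))
  close : ∀ p ∈ Metric.ball (0 : (Fin (m + 1) → ℂ) × (Fin (m + 1) → ℂ)) (4 ^ (m + 1) + 2),
    ‖g p - (∏ i, p.1 i + ∏ i, p.2 i)‖ ≤ (1 / 4) ^ (m + 1)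
  real : ∀ z : Fin (m + 1) → ℂ, ‖z‖ < 4 ^ (m + 1) + 2 → (g (z, star z)).im = 0
  levi : ∀ z : Fin (m + 1) → ℂ, ‖z‖ < 4 ^ (m + 1) + 2 → g (z, star z) = 0 →
    (∃ v, fderiv ℂ g (z, star z) (v, 0) ≠ 0) →
    ∀ U P : Fin (m + 1) → ℂ, fderiv ℂ g (z, star z) (U, 0) = 0 →
      fderiv ℂ g (z, star z) (0, P) = 0 →
      fderiv ℂ (fderiv ℂ g) (z, star z) (0, P) (U, 0) = 0

/-- The vector `(u, x₁, …, xₘ)`, as a continuous linear function of `(u, x)`; it singles out the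
coordinate with index `0`. -/
noncomputable def consL (m : ℕ) : ℂ × (Fin m → ℂ) →L[ℂ] (Fin (m + 1) → ℂ) :=
  (Fin.consEquivL ℂ (fun _ : Fin (m + 1) => ℂ) : ℂ × (Fin m → ℂ) →L[ℂ] (Fin (m + 1) → ℂ))

lemma consL_zero {m : ℕ} (u : ℂ) (x : Fin m → ℂ) : consL m (u, x) 0 = u := by
  simp [consL]

lemma consL_succ {m : ℕ} (u : ℂ) (x : Fin m → ℂ) (i : Fin m) : consL m (u, x) i.succ = x i := by
  simp [consL]

lemma prod_consL {m : ℕ} (u : ℂ) (x : Fin m → ℂ) : ∏ i, consL m (u, x) i = u * ∏ i, x i := by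
  rw [Fin.prod_univ_succ]
  simp [consL_zero, consL_succ]

lemma norm_consL_lt {m : ℕ} {u : ℂ} {x : Fin m → ℂ} {r : ℝ} (hr : 0 < r) (hu : ‖u‖ < r)
    (hx : ∀ i, ‖x i‖ < r) : ‖consL m (u, x)‖ < r := by
  rw [pi_norm_lt_iff hr]
  intro i
  refine Fin.cases ?_ (fun j => ?_) i
  · rwa [consL_zero]
  · rw [consL_succ]; exact hx j

lemma consL_self {m : ℕ} (c : Fin (m + 1) → ℂ) : consL m (c 0, fun i => c i.succ) = c := by
  ext i
  refine Fin.cases ?_ (fun j => ?_) i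
  · rw [consL_zero]
  · rw [consL_succ]

/-- The polyannulus `1/2 < |xᵢ| < 2`. -/
def polyAnn (m : ℕ) : Set (Fin m → ℂ) := Set.pi Set.univ fun _ => {t : ℂ | 1 / 2 < ‖t‖ ∧ ‖t‖ < 2}

lemma mem_polyAnn {m : ℕ} {x : Fin m → ℂ} : x ∈ polyAnn m ↔ ∀ i, 1 / 2 < ‖x i‖ ∧ ‖x i‖ < 2 := by
  simp [polyAnn]

lemma isOpen_polyAnn (m : ℕ) : IsOpen (polyAnn m) :=
  isOpen_set_pi Set.finite_univ fun _ _ =>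
    (isOpen_lt continuous_const continuous_norm).inter (isOpen_lt continuous_norm continuous_const)

lemma isPreconnected_polyAnn (m : ℕ) : IsPreconnected (polyAnn m) := by
  refine isPreconnected_univ_pi fun _ => ?_
  have h : {t : ℂ | 1 / 2 < ‖t‖ ∧ ‖t‖ < 2} =
      (fun y : ℝ × ℝ => (y.1 : ℂ) * Complex.exp (y.2 * Complex.I)) ''
        (Set.Ioo (1 / 2) 2 ×ˢ Set.univ) := by
    ext t
    constructor
    · intro ht
      exact ⟨(‖t‖, Complex.arg t), ⟨ht, trivial⟩, Complex.norm_mul_exp_arg_mul_I t⟩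
    · rintro ⟨y, ⟨⟨h1, h2⟩, -⟩, rfl⟩
      have h0 : 0 < y.1 := by linarith
      simp [Complex.norm_exp_ofReal_mul_I, abs_of_pos h0]
      constructor <;> [simpa using h1; exact h2]
  rw [h]
  refine IsPreconnected.image ?_ _ (by fun_prop)
  exact isPreconnected_Ioo.prod isPreconnected_univ

lemma one_mem_polyAnn (m : ℕ) : (fun _ => 1 : Fin m → ℂ) ∈ polyAnn m := by
  rw [mem_polyAnn]; intro i; norm_num

lemma le_norm_prod_polyAnn {m : ℕ} {x : Fin m → ℂ} (hx : x ∈ polyAnn m) :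
    (1 / 2 : ℝ) ^ m ≤ ‖∏ i, x i‖ := by
  rw [norm_prod]
  calc (1 / 2 : ℝ) ^ m = ∏ _i : Fin m, (1 / 2 : ℝ) := by simp
    _ ≤ _ := Finset.prod_le_prod (fun _ _ => by norm_num) fun i _ => ((mem_polyAnn.1 hx) i).1.le

lemma norm_prod_le_pow {n : ℕ} {b : Fin n → ℂ} {r : ℝ} (hb : ∀ i, ‖b i‖ ≤ r) :
    ‖∏ i, b i‖ ≤ r ^ n := by
  rw [norm_prod]
  calc _ ≤ ∏ _i : Fin n, r := Finset.prod_le_prod (fun _ _ => norm_nonneg _) fun i _ => hb i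
    _ = _ := by simp

lemma quarter_lt (m : ℕ) : (1 / 4 : ℝ) ^ (m + 1) ≤ (1 / 2) ^ m / 4 := by
  rw [pow_succ]
  have : (1 / 4 : ℝ) ^ m ≤ (1 / 2) ^ m := pow_le_pow_left₀ (by norm_num) (by norm_num) m
  linarith

lemma quarter_le (m : ℕ) : (1 / 4 : ℝ) ^ (m + 1) ≤ 1 / 4 := by
  have := quarter_lt m
  have h2 : (1 / 2 : ℝ) ^ m ≤ 1 := pow_le_one₀ (by norm_num) (by norm_num)
  linarith

lemma four_le (m : ℕ) : (4 : ℝ) ≤ 4 ^ (m + 1) := by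
  rw [pow_succ]
  have : (1 : ℝ) ≤ 4 ^ m := one_le_pow₀ (by norm_num)
  linarith

namespace ScaledLevi

variable {m : ℕ} {g : (Fin (m + 1) → ℂ) × (Fin (m + 1) → ℂ) → ℂ}

/-- Cauchy's estimate on unit discs: the directional derivatives of `g` are close to those of its
leading part, here given along the line as the function `P`. -/
lemma norm_fderiv_sub_le (hg : ScaledLevi m g)
    {p v : (Fin (m + 1) → ℂ) × (Fin (m + 1) → ℂ)} (hp : ‖p‖ < 4 ^ (m + 1) + 1) (hv : ‖v‖ ≤ 1)
    {P : ℂ → ℂ} {β : ℂ} (hPd : Differentiable ℂ P) (hβ : HasDerivAt P β 0)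
    (hP : ∀ l : ℂ, ∏ i, (p + l • v).1 i + ∏ i, (p + l • v).2 i = P l) :
    ‖fderiv ℂ g p v - β‖ ≤ (1 / 4) ^ (m + 1) := by
  have hmem : ∀ l : ℂ, ‖l‖ ≤ 1 → p + l • v ∈
      Metric.ball (0 : (Fin (m + 1) → ℂ) × (Fin (m + 1) → ℂ)) (4 ^ (m + 1) + 2) := by
    intro l hl
    rw [mem_ball_zero_iff]
    calc ‖p + l • v‖ ≤ ‖p‖ + ‖l‖ * ‖v‖ := (norm_add_le _ _).trans (by rw [norm_smul])
      _ ≤ ‖p‖ + 1 * 1 := by gcongr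
      _ < _ := by linarith
  have hline : ∀ l : ℂ, HasDerivAt (fun l : ℂ => p + l • v) v l := by
    intro l
    simpa using ((hasDerivAt_id l).smul_const v).const_add p
  have hd : ∀ l : ℂ, ‖l‖ ≤ 1 → HasDerivAt (fun l => g (p + l • v)) (fderiv ℂ g (p + l • v) v) l := by
    intro l hl
    exact (hg.analytic _ (hmem l hl)).differentiableAt.hasFDerivAt.comp_hasDerivAt l (hline l)
  have h0 : HasDerivAt (fun l => g (p + l • v) - P l) (fderiv ℂ g p v - β) 0 := by
    have := (hd 0 (by simp)).fun_sub hβ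
    simpa using this
  have hdc : DiffContOnCl ℂ (fun l => g (p + l • v) - P l) (Metric.ball 0 1) := by
    refine DifferentiableOn.diffContOnCl ?_
    rw [closure_ball _ one_ne_zero]
    intro l hl
    exact ((hd l (mem_closedBall_zero_iff.1 hl)).differentiableAt.sub
      (hPd l)).differentiableWithinAt
  have := Complex.norm_deriv_le_of_forall_mem_sphere_norm_le one_pos hdc
    (C := (1 / 4) ^ (m + 1)) (fun l hl => by
      rw [← hP]
      exact hg.close _ (hmem l (mem_sphere_zero_iff_norm.1 hl).le))
  rw [h0.deriv] at this
  simpa using this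

lemma mem_ball_of (u : ℂ) {b : Fin (m + 1) → ℂ} {x : Fin m → ℂ} {r : ℝ} (hr : 2 ≤ r)
    (hb : ‖b‖ < 2) (hx : x ∈ polyAnn m) (hu : ‖u‖ < r) :
    ‖(b, consL m (u, x))‖ < r := by
  rw [Prod.norm_def]
  exact max_lt (by linarith) (norm_consL_lt (by linarith) hu fun i =>
    lt_of_lt_of_le (mem_polyAnn.1 hx i).2 hr)

lemma norm_gu_sub_le (hg : ScaledLevi m g) {b : Fin (m + 1) → ℂ} {x : Fin m → ℂ} {u : ℂ}
    (hb : ‖b‖ < 2) (hx : x ∈ polyAnn m) (hu : ‖u‖ < 4 ^ (m + 1) + 1) :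
    ‖fderiv ℂ g (b, consL m (u, x)) (0, consL m (1, 0)) - ∏ i, x i‖ ≤ (1 / 4) ^ (m + 1) := by
  have h4 := four_le m
  refine hg.norm_fderiv_sub_le (mem_ball_of u (by linarith) hb hx hu) ?_
    (P := fun l => ∏ i, b i + (u + l) * ∏ i, x i) (by fun_prop) ?_ ?_
  · rw [Prod.norm_def]
    refine max_le (by simp) ?_
    rw [pi_norm_le_iff_of_nonneg zero_le_one]
    intro i
    refine Fin.cases ?_ (fun j => ?_) i
    · simp [consL_zero]
    · simp [consL_succ]
  · simpa using (((hasDerivAt_id (0 : ℂ)).const_add u).mul_const (∏ i, x i)).const_add (∏ i, b i)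
  · intro l
    have : (consL m (u, x) + l • consL m (1, 0)) = consL m (u + l, x) := by
      rw [← map_smul, ← map_add]; simp
    simp only [Prod.fst_add, Prod.snd_add, Prod.smul_fst, Prod.smul_snd, smul_zero, add_zero]
    rw [this, prod_consL]

lemma gu_ne_zero (hg : ScaledLevi m g) {b : Fin (m + 1) → ℂ} {x : Fin m → ℂ} {u : ℂ}
    (hb : ‖b‖ < 2) (hx : x ∈ polyAnn m) (hu : ‖u‖ < 4 ^ (m + 1) + 1) :
    fderiv ℂ g (b, consL m (u, x)) (0, consL m (1, 0)) ≠ 0 := by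
  intro h
  have h1 := hg.norm_gu_sub_le hb hx hu
  rw [h, zero_sub, norm_neg] at h1
  have h2 := le_norm_prod_polyAnn hx
  have h3 := quarter_lt m
  have h4 : (0 : ℝ) < (1 / 2) ^ m := by positivity
  linarith

lemma hasDerivAt_u (hg : ScaledLevi m g) {b : Fin (m + 1) → ℂ} {x : Fin m → ℂ} {u : ℂ}
    (hb : ‖b‖ < 2) (hx : x ∈ polyAnn m) (hu : ‖u‖ < 4 ^ (m + 1) + 2) :
    HasDerivAt (fun u => g (b, consL m (u, x)))
      (fderiv ℂ g (b, consL m (u, x)) (0, consL m (1, 0))) u := by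
  have h4 := four_le m
  have h1 : HasDerivAt (fun u : ℂ => (b, consL m (u, x))) (0, consL m (1, 0)) u := by
    refine (hasDerivAt_const u b).prodMk ?_
    exact (consL m).hasFDerivAt.comp_hasDerivAt u
      ((hasDerivAt_id u).prodMk (hasDerivAt_const u x))
  exact (hg.analytic _ (mem_ball_zero_iff.2 (mem_ball_of u (by linarith) hb hx
    hu))).differentiableAt.hasFDerivAt.comp_hasDerivAt u h1

lemma lipschitz_error (hg : ScaledLevi m g) {b : Fin (m + 1) → ℂ} {x : Fin m → ℂ} {u u' : ℂ}
    (hb : ‖b‖ < 2) (hx : x ∈ polyAnn m) (hu : ‖u‖ ≤ 4 ^ (m + 1)) (hu' : ‖u'‖ ≤ 4 ^ (m + 1)) :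
    ‖(g (b, consL m (u', x)) - u' * ∏ i, x i) - (g (b, consL m (u, x)) - u * ∏ i, x i)‖
      ≤ (1 / 4) ^ (m + 1) * ‖u' - u‖ := by
  refine (convex_closedBall (0 : ℂ) (4 ^ (m + 1))).norm_image_sub_le_of_norm_hasDerivWithin_le
    (f := fun u => g (b, consL m (u, x)) - u * ∏ i, x i)
    (f' := fun u => fderiv ℂ g (b, consL m (u, x)) (0, consL m (1, 0)) - ∏ i, x i)
    ?_ ?_ (mem_closedBall_zero_iff.2 hu) (mem_closedBall_zero_iff.2 hu')
  · intro t ht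
    have ht' := mem_closedBall_zero_iff.1 ht
    have := (hg.hasDerivAt_u hb hx (u := t) (by linarith)).fun_sub
      ((hasDerivAt_id t).mul_const (∏ i, x i))
    simpa using this.hasDerivWithinAt
  · intro t ht
    have ht' := mem_closedBall_zero_iff.1 ht
    exact hg.norm_gu_sub_le hb hx (by linarith)

lemma zero_unique (hg : ScaledLevi m g) {b : Fin (m + 1) → ℂ} {x : Fin m → ℂ} {u u' : ℂ}
    (hb : ‖b‖ < 2) (hx : x ∈ polyAnn m) (hu : ‖u‖ ≤ 4 ^ (m + 1)) (hu' : ‖u'‖ ≤ 4 ^ (m + 1))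
    (h : g (b, consL m (u, x)) = 0) (h' : g (b, consL m (u', x)) = 0) : u = u' := by
  have h1 := hg.lipschitz_error hb hx hu hu'
  rw [h, h', show (0 - u' * ∏ i, x i) - (0 - u * ∏ i, x i) = -((u' - u) * ∏ i, x i) by ring,
    norm_neg, norm_mul] at h1
  have h2 := le_norm_prod_polyAnn hx
  have h3 := quarter_lt m
  have h4 : (0 : ℝ) < (1 / 2) ^ m := by positivity
  by_contra hne
  have h5 : 0 < ‖u' - u‖ := norm_pos_iff.2 (sub_ne_zero.2 (Ne.symm hne))
  have h6 : ‖u' - u‖ * (1 / 2) ^ m ≤ ‖u' - u‖ * ((1 / 2) ^ m / 4) := by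
    calc _ ≤ ‖u' - u‖ * ‖∏ i, x i‖ := by gcongr
      _ ≤ (1 / 4) ^ (m + 1) * ‖u' - u‖ := h1
      _ ≤ ((1 / 2) ^ m / 4) * ‖u' - u‖ := by gcongr
      _ = _ := mul_comm _ _
  have := le_of_mul_le_mul_left h6 h5
  linarith

lemma zero_exists (hg : ScaledLevi m g) {b : Fin (m + 1) → ℂ} {x : Fin m → ℂ}
    (hb : ‖b‖ < 2) (hx : x ∈ polyAnn m) :
    ∃ u : ℂ, ‖u‖ < 4 ^ (m + 1) ∧ g (b, consL m (u, x)) = 0 := by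
  have h2 := le_norm_prod_polyAnn hx
  have h3 := quarter_lt m
  have h4 : (0 : ℝ) < (1 / 2) ^ m := by positivity
  have hq := quarter_le m
  have hp0 : 0 < ‖∏ i, x i‖ := by linarith
  have hp0' : ∏ i, x i ≠ 0 := norm_pos_iff.1 hp0
  set f : ℂ → ℂ := fun u => u - g (b, consL m (u, x)) / ∏ i, x i with hf
  have hT := four_le m
  have hfn : ∀ u : ℂ, ‖u‖ ≤ 4 ^ (m + 1) → ‖f u‖ < 4 ^ (m + 1) := by
    intro u hu
    have hc := hg.close _ (mem_ball_zero_iff.2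
      (mem_ball_of u (r := 4 ^ (m + 1) + 2) (by linarith) hb hx (by linarith)))
    simp only [prod_consL] at hc
    have e1 : f u * ∏ i, x i = -(g (b, consL m (u, x)) - (∏ i, b i + u * ∏ i, x i)) - ∏ i, b i := by
      simp only [hf]; field_simp; ring
    have e2 : ‖∏ i, b i‖ ≤ 2 ^ (m + 1) := norm_prod_le_pow fun i =>
      ((norm_le_pi_norm b i).trans hb.le)
    have e3 : ‖f u‖ * ‖∏ i, x i‖ ≤ 1 / 4 + 2 ^ (m + 1) := by
      rw [← norm_mul, e1]
      refine (norm_sub_le _ _).trans ?_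
      rw [norm_neg]
      linarith
    have e4 : ‖f u‖ * (1 / 2) ^ m ≤ 1 / 4 + 2 ^ (m + 1) :=
      (mul_le_mul_of_nonneg_left h2 (norm_nonneg _)).trans e3
    have e5 : (1 / 4 + 2 ^ (m + 1) : ℝ) < 4 ^ (m + 1) * (1 / 2) ^ m := by
      have : (4 : ℝ) ^ (m + 1) * (1 / 2) ^ m = 4 * 2 ^ m := by
        rw [pow_succ, mul_right_comm, ← mul_pow]; norm_num; ring
      rw [this, pow_succ]
      have : (1 : ℝ) ≤ 2 ^ m := one_le_pow₀ (by norm_num)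
      linarith
    exact lt_of_mul_lt_mul_right (e4.trans_lt e5) h4.le
  have hmaps : Set.MapsTo f (Metric.closedBall 0 (4 ^ (m + 1))) (Metric.closedBall 0 (4 ^ (m + 1))) :=
    fun u hu => mem_closedBall_zero_iff.2 (hfn u (mem_closedBall_zero_iff.1 hu)).le
  have hcontr : ContractingWith (1 / 2) (hmaps.restrict f _ _) := by
    refine ⟨by rw [← NNReal.coe_lt_coe]; norm_num, LipschitzWith.of_dist_le_mul ?_⟩
    rintro ⟨u, hu⟩ ⟨u', hu'⟩
    have h1 := hg.lipschitz_error hb hx (mem_closedBall_zero_iff.1 hu') (mem_closedBall_zero_iff.1 hu)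
    rw [Subtype.dist_eq, Subtype.dist_eq, dist_eq_norm, dist_eq_norm]
    simp only [Set.MapsTo.val_restrict_apply]
    have e1 : f u - f u' = -((g (b, consL m (u, x)) - u * ∏ i, x i)
        - (g (b, consL m (u', x)) - u' * ∏ i, x i)) / ∏ i, x i := by
      simp only [hf]; field_simp; ring
    rw [e1, norm_div, norm_neg, div_le_iff₀ hp0]
    refine h1.trans ?_
    have : (1 / 4 : ℝ) ^ (m + 1) ≤ 1 / 2 * ‖∏ i, x i‖ := by linarith
    calc (1 / 4 : ℝ) ^ (m + 1) * ‖u - u'‖ ≤ (1 / 2 * ‖∏ i, x i‖) * ‖u - u'‖ := by gcongr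
      _ = _ := by push_cast; ring
  obtain ⟨u, hu, hfix, -⟩ := hcontr.exists_fixedPoint' (Metric.isClosed_closedBall.isComplete) hmaps
    (x := 0) (by simp) (edist_ne_top _ _)
  refine ⟨u, ?_, ?_⟩
  · have := hfn u (mem_closedBall_zero_iff.1 hu)
    rwa [show f u = u from hfix] at this
  · have : f u = u := hfix
    simp only [hf] at this
    have h6 : g (b, consL m (u, x)) / ∏ i, x i = 0 := by linear_combination -this
    simpa [hp0'] using h6

/-- Over the polyannulus, where `∏ xᵢ` is bounded below, `g (b, (u, x)) = 0` has a solution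
`u` in a large disc that depends holomorphically on `(b, x)`. -/
lemma exists_kappa (hg : ScaledLevi m g) :
    ∃ κ : (Fin (m + 1) → ℂ) × (Fin m → ℂ) → ℂ,
      AnalyticOnNhd ℂ κ (Metric.ball 0 2 ×ˢ polyAnn m) ∧
      ∀ b x, ‖b‖ < 2 → x ∈ polyAnn m →
        ‖κ (b, x)‖ < 4 ^ (m + 1) ∧ g (b, consL m (κ (b, x), x)) = 0 := by
  classical
  choose! κ hκ using fun (y : (Fin (m + 1) → ℂ) × (Fin m → ℂ))
    (hy : ‖y.1‖ < 2 ∧ y.2 ∈ polyAnn m) => hg.zero_exists hy.1 hy.2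
  have hT := four_le m
  refine ⟨κ, ?_, fun b x hb hx => hκ (b, x) ⟨hb, hx⟩⟩
  rintro ⟨b, x⟩ ⟨hb, hx⟩
  rw [mem_ball_zero_iff] at hb
  have hb' : ‖b‖ < 2 := hb
  have hx' : x ∈ polyAnn m := hx
  obtain ⟨hk1, hk2⟩ := hκ (b, x) ⟨hb', hx'⟩
  set u := κ (b, x) with hu
  set f : ((Fin (m + 1) → ℂ) × (Fin m → ℂ)) × ℂ → ℂ := fun y => g (y.1.1, consL m (y.2, y.1.2)) with hf
  have hfa : AnalyticAt ℂ f ((b, x), u) := by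
    have h1 := hg.analytic _ (mem_ball_zero_iff.2
      (mem_ball_of u (r := 4 ^ (m + 1) + 2) (by linarith) hb' hx' (by linarith)))
    refine AnalyticAt.fun_comp (g := g)
      (f := fun y : ((Fin (m + 1) → ℂ) × (Fin m → ℂ)) × ℂ => (y.1.1, consL m (y.2, y.1.2))) h1 ?_
    refine (analyticAt_fst.fun_comp analyticAt_fst).prod ?_
    exact ((consL m).analyticAt _).fun_comp
      (analyticAt_snd.prod (analyticAt_snd.fun_comp analyticAt_fst))
  have hcd : ContDiffAt ℂ ⊤ f ((b, x), u) := hfa.contDiffAt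
  have hder : fderiv ℂ f ((b, x), u) (0, 1) =
      fderiv ℂ g (b, consL m (u, x)) (0, consL m (1, 0)) := by
    have h1 : HasDerivAt (fun t : ℂ => f ((b, x), t)) (fderiv ℂ f ((b, x), u) (0, 1)) u :=
      hfa.differentiableAt.hasFDerivAt.comp_hasDerivAt u
        ((hasDerivAt_const u (b, x)).prodMk (hasDerivAt_id u))
    exact h1.unique (hg.hasDerivAt_u hb' hx' (by linarith))
  have hne := hg.gu_ne_zero hb' hx' (u := u) (by linarith)
  have hinv : (fderiv ℂ f ((b, x), u) ∘L .inr ℂ ((Fin (m + 1) → ℂ) × (Fin m → ℂ)) ℂ).IsInvertible := by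
    refine ⟨ContinuousLinearEquiv.unitsEquivAut ℂ (Units.mk0 _ (hder ▸ hne)), ?_⟩
    ext
    simp
  have hca := hcd.contDiffAt_implicitFunction (by simp) hinv
  have hev := hcd.eventually_apply_implicitFunction (by simp) hinv
  have hself := hcd.implicitFunction_apply_self (by simp) hinv
  set ψ := hcd.implicitFunction (by simp) hinv with hψ
  have hψc : ContinuousAt ψ (b, x) := hca.continuousAt
  have h1 : ∀ᶠ y in 𝓝 (b, x), ‖ψ y‖ < 4 ^ (m + 1) := by
    refine hψc.norm.eventually_lt_const ?_
    have : ψ (b, x) = u := hself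
    simp only [this]; exact hk1
  have h2 : ∀ᶠ y : (Fin (m + 1) → ℂ) × (Fin m → ℂ) in 𝓝 (b, x), ‖y.1‖ < 2 :=
    (continuous_fst.norm.tendsto (b, x)).eventually_lt_const hb'
  have h3 : ∀ᶠ y : (Fin (m + 1) → ℂ) × (Fin m → ℂ) in 𝓝 (b, x), y.2 ∈ polyAnn m :=
    (continuous_snd.tendsto (b, x)).eventually ((isOpen_polyAnn m).mem_nhds hx')
  have h4 : κ =ᶠ[𝓝 (b, x)] ψ := by
    filter_upwards [h1, h2, h3, hev] with y hy1 hy2 hy3 hy4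
    obtain ⟨hk3, hk4⟩ := hκ y ⟨hy2, hy3⟩
    refine hg.zero_unique hy2 hy3 hk3.le hy1.le hk4 ?_
    simp only [hf] at hy4
    rw [hy4]; exact hk2
  exact (hca.analyticAt).congr h4.symm

end ScaledLevi

/-! ### Extension of the Levi condition -/

lemma analyticAt_clm_apply {E X Y : Type*} [NormedAddCommGroup E] [NormedSpace ℂ E]
    [NormedAddCommGroup X] [NormedSpace ℂ X] [NormedAddCommGroup Y] [NormedSpace ℂ Y]
    {f : E → X →L[ℂ] Y} {k : E → X} {p : E} (hf : AnalyticAt ℂ f p) (hk : AnalyticAt ℂ k p) :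
    AnalyticAt ℂ (fun q => f q (k q)) p :=
  ((ContinuousLinearMap.id ℂ (X →L[ℂ] Y)).analyticAt_bilinear (f p, k p)).fun_comp
    (f := fun q => (f q, k q)) (hf.prod hk)

/-- The mixed second derivative of `g` at `q`, evaluated on the vector
`(∂g/∂z₀) v - (∂g · v) e₀`, which is tangent to the level sets of `g` in the `z`-directions, and
on the vector `(∂g/∂w₀) ζ - (∂g · ζ) e₀`, which is tangent to them in the `w`-directions. Its
vanishing is the complexified Levi condition. -/
noncomputable def leviTerm {m : ℕ} (g : (Fin (m + 1) → ℂ) × (Fin (m + 1) → ℂ) → ℂ)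
    (v ζ : Fin (m + 1) → ℂ) (q : (Fin (m + 1) → ℂ) × (Fin (m + 1) → ℂ)) : ℂ :=
  fderiv ℂ (fderiv ℂ g) q
    (0, fderiv ℂ g q (0, consL m (1, 0)) • ζ - fderiv ℂ g q (0, ζ) • consL m (1, 0))
    (fderiv ℂ g q (consL m (1, 0), 0) • v - fderiv ℂ g q (v, 0) • consL m (1, 0), 0)

lemma analyticAt_leviTerm {m : ℕ} {g : (Fin (m + 1) → ℂ) × (Fin (m + 1) → ℂ) → ℂ}
    {q : (Fin (m + 1) → ℂ) × (Fin (m + 1) → ℂ)} (hg : AnalyticAt ℂ g q)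
    (v ζ : Fin (m + 1) → ℂ) : AnalyticAt ℂ (leviTerm g v ζ) q := by
  have h1 : ∀ a, AnalyticAt ℂ (fun q => fderiv ℂ g q a) q := fun a =>
    analyticAt_clm_apply hg.fderiv analyticAt_const
  refine analyticAt_clm_apply (analyticAt_clm_apply hg.fderiv.fderiv ?_) ?_
  · exact analyticAt_const.prod (((h1 _).smul analyticAt_const).sub
      ((h1 _).smul analyticAt_const))
  · exact (((h1 _).smul analyticAt_const).sub ((h1 _).smul analyticAt_const)).prod analyticAt_const

namespace ScaledLevi

variable {m : ℕ} {g : (Fin (m + 1) → ℂ) × (Fin (m + 1) → ℂ) → ℂ}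

/-- The Levi condition, in terms of `leviTerm`, at the points of the subspace `w = z̄`. -/
lemma leviTerm_real (hg : ScaledLevi m g) {z : Fin (m + 1) → ℂ} (hz : ‖z‖ < 4 ^ (m + 1) + 2)
    (h0 : g (z, star z) = 0) (v ζ : Fin (m + 1) → ℂ) : leviTerm g v ζ (z, star z) = 0 := by
  have lin1 : ∀ (a b : ℂ) (x y : Fin (m + 1) → ℂ),
      ((a • x - b • y, 0) : (Fin (m + 1) → ℂ) × (Fin (m + 1) → ℂ)) = a • (x, 0) - b • (y, 0) := by
    intro a b x y; ext <;> simp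
  have lin2 : ∀ (a b : ℂ) (x y : Fin (m + 1) → ℂ),
      ((0, a • x - b • y) : (Fin (m + 1) → ℂ) × (Fin (m + 1) → ℂ)) = a • (0, x) - b • (0, y) := by
    intro a b x y; ext <;> simp
  by_cases hv : ∃ v, fderiv ℂ g (z, star z) (v, 0) ≠ 0
  · refine hg.levi z hz h0 hv _ _ ?_ ?_
    · rw [lin1, map_sub, map_smul, map_smul, smul_eq_mul, smul_eq_mul]; ring
    · rw [lin2, map_sub, map_smul, map_smul, smul_eq_mul, smul_eq_mul]; ring
  · push Not at hv
    simp only [leviTerm, hv, zero_smul, sub_zero]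
    exact map_zero _

/-- `κ` solves `g (b, (u, x)) = 0` for `u` with `‖u‖ < 4 ^ (m + 1)`, holomorphically in `(b, x)`. -/
structure IsSolution (g : (Fin (m + 1) → ℂ) × (Fin (m + 1) → ℂ) → ℂ)
    (κ : (Fin (m + 1) → ℂ) × (Fin m → ℂ) → ℂ) : Prop where
  analytic : AnalyticOnNhd ℂ κ (Metric.ball 0 2 ×ˢ polyAnn m)
  bound : ∀ b x, ‖b‖ < 2 → x ∈ polyAnn m → ‖κ (b, x)‖ < 4 ^ (m + 1)
  zero : ∀ b x, ‖b‖ < 2 → x ∈ polyAnn m → g (b, consL m (κ (b, x), x)) = 0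

variable {κ : (Fin (m + 1) → ℂ) × (Fin m → ℂ) → ℂ}

lemma mem_ball_kappa (hκ : IsSolution g κ) {b : Fin (m + 1) → ℂ} {x : Fin m → ℂ}
    (hb : ‖b‖ < 2) (hx : x ∈ polyAnn m) :
    (b, consL m (κ (b, x), x)) ∈
      Metric.ball (0 : (Fin (m + 1) → ℂ) × (Fin (m + 1) → ℂ)) (4 ^ (m + 1) + 2) := by
  have h4 := four_le m
  have := hκ.bound b x hb hx
  exact mem_ball_zero_iff.2 (mem_ball_of _ (by linarith) hb hx (by linarith))

lemma analyticAt_point (hκ : IsSolution g κ) {b : Fin (m + 1) → ℂ} {x : Fin m → ℂ}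
    (hb : ‖b‖ < 2) (hx : x ∈ polyAnn m) :
    AnalyticAt ℂ (fun y : (Fin (m + 1) → ℂ) × (Fin m → ℂ) => (y.1, consL m (κ y, y.2))) (b, x) := by
  refine analyticAt_fst.prod ?_
  exact ((consL m).analyticAt _).fun_comp
    ((hκ.analytic (b, x) ⟨mem_ball_zero_iff.2 hb, hx⟩).prod analyticAt_snd)

lemma analyticAt_levi_kappa (hg : ScaledLevi m g) (hκ : IsSolution g κ) (v ζ : Fin (m + 1) → ℂ)
    {b : Fin (m + 1) → ℂ} {x : Fin m → ℂ} (hb : ‖b‖ < 2) (hx : x ∈ polyAnn m) :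
    AnalyticAt ℂ (fun y : (Fin (m + 1) → ℂ) × (Fin m → ℂ) =>
      leviTerm g v ζ (y.1, consL m (κ y, y.2))) (b, x) :=
  (analyticAt_leviTerm (hg.analytic _ (mem_ball_kappa hκ hb hx)) v ζ).fun_comp
    (f := fun y : (Fin (m + 1) → ℂ) × (Fin m → ℂ) => (y.1, consL m (κ y, y.2)))
    (analyticAt_point hκ hb hx)

lemma star_consL (u : ℂ) (x : Fin m → ℂ) : star (consL m (u, x)) = consL m (star u, star x) := by
  ext i
  refine Fin.cases ?_ (fun j => ?_) i
  · simp [consL_zero]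
  · simp [consL_succ]

lemma star_mem_polyAnn {x : Fin m → ℂ} (hx : x ∈ polyAnn m) : star x ∈ polyAnn m := by
  rw [mem_polyAnn] at *
  simpa using hx

/-- Over the totally real set `x = conj b'`, the Levi term vanishes for `b₀` near `i`: the real
hypersurface meets each horizontal segment there, which gives infinitely many zeros of a
holomorphic function of `b₀`. -/
lemma levi_zero_real (hg : ScaledLevi m g) (hκ : IsSolution g κ) (v ζ : Fin (m + 1) → ℂ)
    {b' : Fin m → ℂ} (hb' : b' ∈ polyAnn m) (hp : ‖∏ i, b' i - 1‖ < 1 / 16)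
    {b0 : ℂ} (hb0 : b0 ∈ Metric.ball Complex.I (1 / 2)) :
    leviTerm g v ζ (consL m (b0, b'), consL m (κ (consL m (b0, b'), star b'), star b')) = 0 := by
  have hT := four_le m
  have hq := quarter_le m
  have hn : ∀ {c : ℂ}, c ∈ Metric.ball Complex.I (1 / 2) → ‖c‖ < 3 / 2 := by
    intro c hc
    rw [mem_ball_iff_norm] at hc
    calc ‖c‖ = ‖(c - Complex.I) + Complex.I‖ := by ring_nf
      _ ≤ ‖c - Complex.I‖ + ‖Complex.I‖ := norm_add_le _ _
      _ < 3 / 2 := by rw [Complex.norm_I]; linarith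
  have hb2 : ∀ {c : ℂ}, c ∈ Metric.ball Complex.I (1 / 2) → ‖consL m (c, b')‖ < 2 := fun hc =>
    norm_consL_lt two_pos (by linarith [hn hc]) fun i => (mem_polyAnn.1 hb' i).2
  set f : ℂ → ℂ := fun c => leviTerm g v ζ
    (consL m (c, b'), consL m (κ (consL m (c, b'), star b'), star b')) with hf
  have hfa : AnalyticOnNhd ℂ f (Metric.ball Complex.I (1 / 2)) := by
    intro c hc
    refine (hg.analyticAt_levi_kappa hκ v ζ (hb2 hc) (star_mem_polyAnn hb')).fun_comp
      (f := fun c : ℂ => (consL m (c, b'), star b')) ?_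
    exact (((consL m).analyticAt _).fun_comp (analyticAt_id.prod analyticAt_const)).prod
      analyticAt_const
  -- the value of `g` on the real slice
  have hreal : ∀ c ∈ Metric.ball Complex.I (1 / 2),
      |(g (consL m (c, b'), star (consL m (c, b')))).re - 2 * c.re| < 15 / 32 := by
    intro c hc
    have h1 := hg.close (consL m (c, b'), star (consL m (c, b'))) (by
      rw [mem_ball_zero_iff, Prod.norm_def]
      have := hb2 hc
      refine max_lt (by dsimp only; linarith) ?_
      dsimp only
      rw [norm_star]; linarith)
    have h2 : ∏ i, (star (consL m (c, b'))) i = star (∏ i, consL m (c, b') i) := by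
      simp
    simp only [h2, prod_consL] at h1
    have h3 := (Complex.abs_re_le_norm _).trans h1
    have h4 : ‖c * (∏ i, b' i - 1)‖ ≤ 3 / 2 * (1 / 16) := by
      rw [norm_mul]
      have := hn hc
      gcongr
    have h5 := (Complex.abs_re_le_norm _).trans h4
    have h6 : (c * (∏ i, b' i - 1)).re = (c * ∏ i, b' i).re - c.re := by
      rw [mul_sub, mul_one, Complex.sub_re]
    rw [h6] at h5
    have h7 : (g (consL m (c, b'), star (consL m (c, b'))) -
        (c * ∏ i, b' i + star (c * ∏ i, b' i))).re =
        (g (consL m (c, b'), star (consL m (c, b')))).re - 2 * (c * ∏ i, b' i).re := by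
      rw [Complex.sub_re, Complex.add_re, Complex.star_def, Complex.conj_re]; ring
    rw [h7] at h3
    rw [abs_le] at h3 h5
    rw [abs_lt]
    constructor <;> linarith [h3.1, h3.2, h5.1, h5.2]
  have hzero : ∀ c ∈ Metric.ball Complex.I (1 / 2),
      (g (consL m (c, b'), star (consL m (c, b')))).re = 0 → f c = 0 := by
    intro c hc h
    have hb := hb2 hc
    have h0 : g (consL m (c, b'), star (consL m (c, b'))) = 0 :=
      Complex.ext h (hg.real _ (by linarith))
    have hs := star_mem_polyAnn hb'
    have hk : κ (consL m (c, b'), star b') = star c := by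
      refine hg.zero_unique hb hs (hκ.bound _ _ hb hs).le ?_ (hκ.zero _ _ hb hs) ?_
      · rw [norm_star]; linarith [hn hc]
      · rw [← star_consL]; exact h0
    simp only [hf]
    rw [hk, ← star_consL]
    exact hg.leviTerm_real (by linarith) h0 v ζ
  have hmem : ∀ p ∈ Set.Icc (-(1 / 4) : ℝ) (1 / 4), ∀ q ∈ Set.Icc (-(1 / 4) : ℝ) (1 / 4),
      (⟨-q, 1 + p⟩ : ℂ) ∈ Metric.closedBall Complex.I (3 / 8) := by
    intro p hp q hq
    rw [mem_closedBall_iff_norm, Complex.norm_def, Real.sqrt_le_left (by norm_num),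
      Complex.normSq_apply]
    simp
    nlinarith [hp.1, hp.2, hq.1, hq.2]
  have hsub : Metric.closedBall Complex.I (3 / 8) ⊆ Metric.ball Complex.I (1 / 2) :=
    Metric.closedBall_subset_ball (by norm_num)
  have hex : ∀ p ∈ Set.Icc (-(1 / 4) : ℝ) (1 / 4), ∃ q ∈ Set.Icc (-(1 / 4) : ℝ) (1 / 4),
      (g (consL m (⟨-q, 1 + p⟩, b'), star (consL m (⟨-q, 1 + p⟩, b')))).re = 0 := by
    intro p hp
    have hcont : ContinuousOn (fun q : ℝ =>
        (g (consL m (⟨-q, 1 + p⟩, b'), star (consL m (⟨-q, 1 + p⟩, b')))).re)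
        (Set.Icc (-(1 / 4) : ℝ) (1 / 4)) := by
      intro q hq
      have hb := hb2 (hsub (hmem p hp q hq))
      have hga : ContinuousAt g (consL m (⟨-q, 1 + p⟩, b'), star (consL m (⟨-q, 1 + p⟩, b'))) := by
        refine (hg.analytic _ ?_).continuousAt
        rw [mem_ball_zero_iff, Prod.norm_def]
        refine max_lt (by dsimp only; linarith) ?_
        dsimp only
        rw [norm_star]; linarith
      have hc : Continuous fun q : ℝ => (⟨-q, 1 + p⟩ : ℂ) := by
        have : (fun q : ℝ => (⟨-q, 1 + p⟩ : ℂ)) = fun q : ℝ => -(q : ℂ) + (1 + p) * Complex.I := by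
          ext q; apply Complex.ext <;> simp
        rw [this]; fun_prop
      have hc2 : Continuous fun q : ℝ => (consL m ((⟨-q, 1 + p⟩ : ℂ), b'),
          star (consL m ((⟨-q, 1 + p⟩ : ℂ), b'))) := by fun_prop
      exact (Complex.continuous_re.continuousAt.comp
        (ContinuousAt.comp (f := fun q : ℝ => (consL m ((⟨-q, 1 + p⟩ : ℂ), b'),
          star (consL m ((⟨-q, 1 + p⟩ : ℂ), b')))) hga hc2.continuousAt)).continuousWithinAt
    have hivt := intermediate_value_Icc' (by norm_num) hcont
    have e1 := hreal _ (hsub (hmem p hp (1 / 4) (by norm_num)))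
    have e2 := hreal _ (hsub (hmem p hp (-(1 / 4)) (by norm_num)))
    rw [abs_lt] at e1 e2
    dsimp only at e1 e2
    exact hivt ⟨by linarith [e1.2], by linarith [e2.1]⟩
  set Z : Set ℂ := {c | c ∈ Metric.closedBall Complex.I (3 / 8) ∧ f c = 0} with hZ
  have hinf : Z.Infinite := by
    refine Set.Infinite.of_image Complex.im ?_
    refine Set.Infinite.mono ?_ (Set.Icc_infinite (show (3 / 4 : ℝ) < 5 / 4 by norm_num))
    intro y hy
    have hp : y - 1 ∈ Set.Icc (-(1 / 4) : ℝ) (1 / 4) :=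
      ⟨by linarith [hy.1], by linarith [hy.2]⟩
    obtain ⟨q, hq, h0⟩ := hex (y - 1) hp
    refine ⟨⟨-q, 1 + (y - 1)⟩, ⟨hmem _ hp q hq, hzero _ (hsub (hmem _ hp q hq)) h0⟩, ?_⟩
    simp
  obtain ⟨c, hc, hacc⟩ := hinf.exists_accPt_of_subset_isCompact
    (isCompact_closedBall Complex.I (3 / 8)) fun c hc => hc.1
  rw [accPt_iff_frequently_nhdsNE] at hacc
  exact hfa.eqOn_zero_of_preconnected_of_frequently_eq_zero
    (convex_ball Complex.I (1 / 2)).isPreconnected (hsub hc) (hacc.mono fun c hc => hc.2) hb0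

/-- The identity theorem on `w = z̄` spreads the vanishing of the Levi term from the real points to
the whole part of the zero set parametrised by `κ`. -/
lemma levi_zero (hg : ScaledLevi m g) (hκ : IsSolution g κ) (v ζ : Fin (m + 1) → ℂ)
    {b : Fin (m + 1) → ℂ} (hb : ‖b‖ < 2) (hb0 : b 0 ∈ Metric.ball Complex.I (1 / 2))
    {x : Fin m → ℂ} (hx : x ∈ polyAnn m) :
    leviTerm g v ζ (b, consL m (κ (b, x), x)) = 0 := by
  have hb0n : ‖b 0‖ < 2 := (norm_le_pi_norm b 0).trans_lt hb
  set K : (Fin m → ℂ) × (Fin m → ℂ) → ℂ := fun y =>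
    leviTerm g v ζ (consL m (b 0, y.1), consL m (κ (consL m (b 0, y.1), y.2), y.2)) with hK
  have hKa : AnalyticOnNhd ℂ K (Metric.ball 0 2 ×ˢ polyAnn m) := by
    rintro ⟨b', x'⟩ ⟨h1, h2⟩
    have h1' : ‖consL m (b 0, b')‖ < 2 :=
      norm_consL_lt two_pos hb0n fun i => (norm_le_pi_norm b' i).trans_lt (mem_ball_zero_iff.1 h1)
    refine AnalyticAt.fun_comp (x := (b', x'))
      (f := fun y : (Fin m → ℂ) × (Fin m → ℂ) => (consL m (b 0, y.1), y.2))
      (hg.analyticAt_levi_kappa hκ v ζ h1' h2) ?_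
    exact (((consL m).analyticAt _).fun_comp (analyticAt_const.prod analyticAt_fst)).prod
      analyticAt_snd
  have h1p := one_mem_polyAnn m
  have hstar : star (fun _ => 1 : Fin m → ℂ) = fun _ => 1 := by ext; simp
  have hone : ((fun _ => 1 : Fin m → ℂ), (fun _ => 1 : Fin m → ℂ)) ∈
      (Metric.ball 0 2 ×ˢ polyAnn m : Set _) := by
    refine ⟨mem_ball_zero_iff.2 ?_, h1p⟩
    dsimp only
    rw [pi_norm_lt_iff two_pos]; intro i; norm_num
  have hev : ∀ᶠ y in 𝓝 ((fun _ => 1 : Fin m → ℂ), star (fun _ => 1 : Fin m → ℂ)), K y = 0 := by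
    refine eventually_zero_of_totallyReal (hKa _ (by rw [hstar]; exact hone)) ?_
    have e1 : ∀ᶠ z : Fin m → ℂ in 𝓝 (fun _ => 1), z ∈ polyAnn m :=
      (isOpen_polyAnn m).mem_nhds h1p
    have e2 : ∀ᶠ z : Fin m → ℂ in 𝓝 (fun _ => 1), ‖∏ i, z i - 1‖ < 1 / 16 := by
      have hc : Continuous fun z : Fin m → ℂ => ‖∏ i, z i - 1‖ := by fun_prop
      refine (hc.tendsto _).eventually_lt_const ?_
      simp
    filter_upwards [e1, e2] with z hz1 hz2
    exact hg.levi_zero_real hκ v ζ hz1 hz2 hb0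
  rw [hstar] at hev
  have hpre : IsPreconnected (Metric.ball (0 : Fin m → ℂ) 2 ×ˢ polyAnn m) :=
    (convex_ball _ _).isPreconnected.prod (isPreconnected_polyAnn m)
  have := hKa.eqOn_zero_of_preconnected_of_eventuallyEq_zero hpre hone hev
    (x := ((fun i => b i.succ), x)) ⟨mem_ball_zero_iff.2 (by
      dsimp only
      rw [pi_norm_lt_iff two_pos]
      exact fun i => (norm_le_pi_norm b i.succ).trans_lt hb), hx⟩
  simpa only [hK, consL_self, Pi.zero_apply] using this

end ScaledLevi

/-! ### Analytic continuation of vanishing, and the tangent ratios -/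

/-- If a holomorphic `D` vanishes on the zeros of `G (y, ·)` in the disc for `y` near one point of
a convex domain and these zeros are simple there, and if the zeros of `G (y, ·)` never reach the
boundary circle for any `y`, then `D` vanishes on the zeros of `G` over the whole domain. The
Cauchy integral of `D / G` is defined for all `y`, and `cauchy_division` continues analytically. -/
lemma division_extend {E : Type*} [NormedAddCommGroup E] [NormedSpace ℂ E] {Ω : Set E}
    (hΩ : IsOpen Ω) (hΩc : Convex ℝ Ω) {G D : E × ℂ → ℂ} {R : ℝ} (hR : 0 ≤ R)
    (hG : AnalyticOnNhd ℂ G (Ω ×ˢ Metric.closedBall 0 R))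
    (hD : AnalyticOnNhd ℂ D (Ω ×ˢ Metric.closedBall 0 R))
    (hs : ∀ y ∈ Ω, ∀ τ ∈ Metric.sphere (0 : ℂ) R, G (y, τ) ≠ 0)
    {y₀ : E} (hy₀ : y₀ ∈ Ω)
    (hev : ∀ᶠ y in 𝓝 y₀, ∀ t ∈ Metric.closedBall (0 : ℂ) R, G (y, t) = 0 →
      D (y, t) = 0 ∧ deriv (fun t => G (y, t)) t ≠ 0)
    {y : E} (hy : y ∈ Ω) {t : ℂ} (ht : t ∈ Metric.ball (0 : ℂ) R) (h0 : G (y, t) = 0) :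
    D (y, t) = 0 := by
  set ℓ : ℂ → E := fun l => y₀ + l • (y - y₀) with hℓ
  have hℓa : ∀ l, AnalyticAt ℂ ℓ l := fun l =>
    analyticAt_const.add (analyticAt_id.smul analyticAt_const)
  have hℓc : Continuous ℓ := by fun_prop
  set W : Set ℂ := ℓ ⁻¹' Ω with hW
  have hWo : IsOpen W := hΩ.preimage hℓc
  have hWc : Convex ℝ W := by
    intro a ha b hb s r hs hr hsr
    have h1 := hΩc ha hb hs hr hsr
    have h2 : ℓ (s • a + r • b) = s • ℓ a + r • ℓ b := by
      have : y₀ = s • y₀ + r • y₀ := by rw [← add_smul, hsr, one_smul]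
      simp only [hℓ, smul_add, add_smul, smul_assoc]
      nth_rewrite 1 [this]
      abel
    change ℓ (s • a + r • b) ∈ Ω
    rwa [h2]
  have hℓ0 : ℓ 0 = y₀ := by simp [hℓ]
  have hℓ1 : ℓ 1 = y := by simp [hℓ]
  have h0W : (0 : ℂ) ∈ W := by change ℓ 0 ∈ Ω; rwa [hℓ0]
  have h1W : (1 : ℂ) ∈ W := by change ℓ 1 ∈ Ω; rwa [hℓ1]
  have htc := Metric.ball_subset_closedBall ht
  have hslice : ∀ {f : E × ℂ → ℂ}, AnalyticOnNhd ℂ f (Ω ×ˢ Metric.closedBall 0 R) →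
      ∀ τ ∈ Metric.closedBall (0 : ℂ) R, ∀ l ∈ W, AnalyticAt ℂ (fun l => f (ℓ l, τ)) l := by
    intro f hf τ hτ l hl
    exact AnalyticAt.fun_comp (f := fun l => (ℓ l, τ)) (hf (ℓ l, τ) ⟨hl, hτ⟩)
      ((hℓa l).prod analyticAt_const)
  have hint : DifferentiableOn ℂ
      (fun l => ∮ τ in C(0, R), (τ - t)⁻¹ * (D (ℓ l, τ) / G (ℓ l, τ))) W := by
    refine differentiableOn_circleIntegral_param
      (f := fun q => (q.2 - t)⁻¹ * (D (ℓ q.1, q.2) / G (ℓ q.1, q.2))) hWo hR ?_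
    rintro ⟨l, τ⟩ ⟨hl, hτ⟩
    have hτc : τ ∈ Metric.closedBall (0 : ℂ) R := Metric.sphere_subset_closedBall hτ
    have hq : AnalyticAt ℂ (fun q : ℂ × ℂ => (ℓ q.1, q.2)) (l, τ) :=
      ((hℓa l).fun_comp (x := (l, τ)) (f := fun q : ℂ × ℂ => q.1) analyticAt_fst).prod analyticAt_snd
    have hDa := AnalyticAt.fun_comp (f := fun q : ℂ × ℂ => (ℓ q.1, q.2)) (x := (l, τ))
      (hD (ℓ l, τ) ⟨hl, hτc⟩) hq
    have hGa := AnalyticAt.fun_comp (f := fun q : ℂ × ℂ => (ℓ q.1, q.2)) (x := (l, τ))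
      (hG (ℓ l, τ) ⟨hl, hτc⟩) hq
    refine AnalyticAt.mul (AnalyticAt.inv (analyticAt_snd.sub analyticAt_const) ?_)
      (hDa.div hGa (hs _ hl _ hτ))
    intro h
    have h1 : τ = t := sub_eq_zero.1 h
    rw [mem_ball_zero_iff] at ht
    have h2 : ‖τ‖ = R := mem_sphere_zero_iff_norm.1 hτ
    rw [h1] at h2
    linarith
  set Φ : ℂ → ℂ := fun l => (2 * Real.pi * Complex.I : ℂ) * D (ℓ l, t) -
    G (ℓ l, t) * ∮ τ in C(0, R), (τ - t)⁻¹ * (D (ℓ l, τ) / G (ℓ l, τ)) with hΦ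
  have hΦa : AnalyticOnNhd ℂ Φ W := by
    refine DifferentiableOn.analyticOnNhd ?_ hWo
    refine DifferentiableOn.sub (DifferentiableOn.mul (differentiableOn_const _) ?_)
      (DifferentiableOn.mul ?_ hint)
    · exact fun l hl => (hslice hD t htc l hl).differentiableAt.differentiableWithinAt
    · exact fun l hl => (hslice hG t htc l hl).differentiableAt.differentiableWithinAt
  have hΦ0 : Φ =ᶠ[𝓝 0] 0 := by
    have e1 : ∀ᶠ l in 𝓝 (0 : ℂ), ∀ t ∈ Metric.closedBall (0 : ℂ) R, G (ℓ l, t) = 0 →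
      D (ℓ l, t) = 0 ∧ deriv (fun t => G (ℓ l, t)) t ≠ 0 := by
      have : Tendsto ℓ (𝓝 0) (𝓝 y₀) := by
        have := hℓc.tendsto 0
        rwa [hℓ0] at this
      exact this.eventually hev
    filter_upwards [e1, hWo.mem_nhds h0W] with l hl1 hl2
    have hfib : ∀ {f : E × ℂ → ℂ}, AnalyticOnNhd ℂ f (Ω ×ˢ Metric.closedBall 0 R) →
        AnalyticOnNhd ℂ (fun τ => f (ℓ l, τ)) (Metric.closedBall 0 R) := by
      intro f hf τ hτ
      exact AnalyticAt.fun_comp (f := fun τ => (ℓ l, τ)) (hf (ℓ l, τ) ⟨hl2, hτ⟩)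
        (analyticAt_const.prod analyticAt_id)
    have := cauchy_division (hfib hD) (hfib hG) hl1 (hs _ hl2) ht
    simp only [hΦ, Pi.zero_apply]
    rw [this, sub_self]
  have h1 := hΦa.eqOn_zero_of_preconnected_of_eventuallyEq_zero hWc.isPreconnected h0W hΦ0 h1W
  simp only [hΦ, hℓ1, h0, zero_mul, sub_zero, Pi.zero_apply] at h1
  have h2 : (2 * Real.pi * Complex.I : ℂ) ≠ 0 := by
    simp [Real.pi_ne_zero, Complex.I_ne_zero]
  exact (mul_eq_zero.1 h1).resolve_left h2

namespace ScaledLevi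

variable {m : ℕ} {g : (Fin (m + 1) → ℂ) × (Fin (m + 1) → ℂ) → ℂ}
  {κ : (Fin (m + 1) → ℂ) × (Fin m → ℂ) → ℂ}

lemma norm_consL_one_zero_le (m : ℕ) : ‖consL m (1, 0)‖ ≤ 1 := by
  rw [pi_norm_le_iff_of_nonneg zero_le_one]
  intro i
  refine Fin.cases ?_ (fun j => ?_) i
  · simp [consL_zero]
  · simp [consL_succ]

/-- `∂g/∂z₀` is close to `∏_{i ≥ 1} zᵢ`. -/
lemma gz_ne_zero (hg : ScaledLevi m g) {p : (Fin (m + 1) → ℂ) × (Fin (m + 1) → ℂ)}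
    (hp : ‖p‖ < 4 ^ (m + 1) + 1) (hb : ‖∏ i : Fin m, p.1 i.succ - 1‖ < 1 / 2) :
    fderiv ℂ g p (consL m (1, 0), 0) ≠ 0 := by
  intro h
  have h1 : ‖fderiv ℂ g p (consL m (1, 0), 0) - ∏ i : Fin m, p.1 i.succ‖ ≤ (1 / 4) ^ (m + 1) := by
    refine hg.norm_fderiv_sub_le hp ?_
      (P := fun l => (p.1 0 + l) * ∏ i : Fin m, p.1 i.succ + ∏ i, p.2 i) (by fun_prop) ?_ ?_
    · rw [Prod.norm_def]
      exact max_le (norm_consL_one_zero_le m) (by simp)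
    · simpa using (((hasDerivAt_id (0 : ℂ)).const_add (p.1 0)).mul_const
        (∏ i : Fin m, p.1 i.succ)).add_const (∏ i, p.2 i)
    · intro l
      simp only [Prod.fst_add, Prod.snd_add, Prod.smul_fst, Prod.smul_snd, smul_zero, add_zero]
      rw [Fin.prod_univ_succ]
      simp [consL_zero, consL_succ]
  rw [h, zero_sub, norm_neg] at h1
  have h2 := quarter_le m
  have h3 : ‖(1 : ℂ)‖ ≤ ‖∏ i : Fin m, p.1 i.succ‖ + ‖∏ i : Fin m, p.1 i.succ - 1‖ := by
    calc ‖(1 : ℂ)‖ = ‖∏ i : Fin m, p.1 i.succ - (∏ i : Fin m, p.1 i.succ - 1)‖ := by ring_nf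
      _ ≤ _ := norm_sub_le _ _
  rw [norm_one] at h3
  linarith

/-- The ratios of the `z`-derivatives of `g` along the zero set do not depend on `x`: their
derivatives in the directions of `x` are multiples of the Levi term. -/
lemma ratio_const (hg : ScaledLevi m g) (hκ : IsSolution g κ) {b : Fin (m + 1) → ℂ} (hb : ‖b‖ < 2)
    (hb0 : b 0 ∈ Metric.ball Complex.I (1 / 2)) (hb1 : ‖∏ i : Fin m, b i.succ - 1‖ < 1 / 2)
    (v : Fin (m + 1) → ℂ) {x x' : Fin m → ℂ} (hx : x ∈ polyAnn m) (hx' : x' ∈ polyAnn m) :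
    fderiv ℂ g (b, consL m (κ (b, x), x)) (v, 0) /
        fderiv ℂ g (b, consL m (κ (b, x), x)) (consL m (1, 0), 0) =
      fderiv ℂ g (b, consL m (κ (b, x'), x')) (v, 0) /
        fderiv ℂ g (b, consL m (κ (b, x'), x')) (consL m (1, 0), 0) := by
  have h4 := four_le m
  set q : (Fin m → ℂ) → (Fin (m + 1) → ℂ) × (Fin (m + 1) → ℂ) :=
    fun x => (b, consL m (κ (b, x), x)) with hq
  have hne : ∀ x ∈ polyAnn m, fderiv ℂ g (q x) (consL m (1, 0), 0) ≠ 0 := by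
    intro x hx
    have := hκ.bound b x hb hx
    exact hg.gz_ne_zero (mem_ball_of _ (by linarith) hb hx (by linarith)) hb1
  have hqa : ∀ x ∈ polyAnn m, AnalyticAt ℂ q x := by
    intro x hx
    exact AnalyticAt.fun_comp (f := fun x => (b, x)) (x := x) (analyticAt_point hκ hb hx)
      (analyticAt_const.prod analyticAt_id)
  have hga : ∀ x ∈ polyAnn m, AnalyticAt ℂ g (q x) := fun x hx =>
    hg.analytic _ (mem_ball_kappa hκ hb hx)
  have hpa : ∀ a, ∀ x ∈ polyAnn m, AnalyticAt ℂ (fun x => fderiv ℂ g (q x) a) x := by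
    intro a x hx
    exact analyticAt_clm_apply ((hga x hx).fderiv.fun_comp (hqa x hx)) analyticAt_const
  set φ : (Fin m → ℂ) → ℂ := fun x =>
    fderiv ℂ g (q x) (v, 0) / fderiv ℂ g (q x) (consL m (1, 0), 0) with hφ
  have hφa : ∀ x ∈ polyAnn m, AnalyticAt ℂ φ x := fun x hx =>
    (hpa _ x hx).div (hpa _ x hx) (hne x hx)
  refine (isOpen_polyAnn m).is_const_of_fderiv_eq_zero (𝕜 := ℂ) (f := φ)
    (isPreconnected_polyAnn m)
    (fun x hx => (hφa x hx).differentiableAt.differentiableWithinAt) ?_ hx hx'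
  intro x hx
  ext1 ξ
  have hline : HasDerivAt (fun l : ℂ => x + l • ξ) ξ 0 := by
    simpa using ((hasDerivAt_id (0 : ℂ)).smul_const ξ).const_add x
  have hx0 : x + (0 : ℂ) • ξ = x := by simp
  -- the velocity of the point `q` along the line `x + l ξ`
  set k : ℂ := fderiv ℂ (fun x => κ (b, x)) x ξ with hk
  have hκd : HasDerivAt (fun l : ℂ => κ (b, x + l • ξ)) k 0 := by
    have h1 : AnalyticAt ℂ (fun x => κ (b, x)) x :=
      AnalyticAt.fun_comp (f := fun x => (b, x)) (x := x)
        (hκ.analytic (b, x) ⟨mem_ball_zero_iff.2 hb, hx⟩) (analyticAt_const.prod analyticAt_id)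
    exact h1.differentiableAt.hasFDerivAt.comp_hasDerivAt_of_eq 0 hline hx0.symm
  have hqd : HasDerivAt (fun l : ℂ => q (x + l • ξ)) (0, consL m (k, ξ)) 0 := by
    refine (hasDerivAt_const _ _).prodMk ?_
    exact (consL m).hasFDerivAt.comp_hasDerivAt 0 (hκd.prodMk hline)
  have hA : ∀ a, HasDerivAt (fun l : ℂ => fderiv ℂ g (q (x + l • ξ)) a)
      (fderiv ℂ (fderiv ℂ g) (q x) (0, consL m (k, ξ)) a) 0 := by
    intro a
    have h1 := (hga x hx).fderiv.differentiableAt.hasFDerivAt.comp_hasDerivAt_of_eq 0 hqd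
      (by rw [hx0])
    simpa using h1.clm_apply (hasDerivAt_const (0 : ℂ) a)
  have hg0 : fderiv ℂ g (q x) (0, consL m (k, ξ)) = 0 := by
    have h1 := (hga x hx).differentiableAt.hasFDerivAt.comp_hasDerivAt_of_eq 0 hqd
      (by rw [hx0])
    have h2 : (g ∘ fun l : ℂ => q (x + l • ξ)) =ᶠ[𝓝 0] fun _ => 0 := by
      have hc : Continuous fun l : ℂ => x + l • ξ := by fun_prop
      have : Tendsto (fun l : ℂ => x + l • ξ) (𝓝 0) (𝓝 x) := by
        have := hc.tendsto 0
        rwa [hx0] at this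
      filter_upwards [this.eventually ((isOpen_polyAnn m).mem_nhds hx)] with l hl
      exact hκ.zero _ _ hb hl
    exact h1.unique ((hasDerivAt_const (0 : ℂ) (0 : ℂ)).congr_of_eventuallyEq h2)
  have hsplit : consL m (k, ξ) = consL m (0, ξ) + k • consL m (1, 0) := by
    rw [← map_smul, ← map_add]; simp
  have hφd := (hA (v, 0)).fun_div (hA (consL m (1, 0), 0)) (by rw [hx0]; exact hne x hx)
  have hφd' := (hφa x hx).differentiableAt.hasFDerivAt.comp_hasDerivAt_of_eq 0 hline hx0.symm
  have huniq := hφd'.unique hφd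
  rw [huniq, hx0]
  have hL := hg.levi_zero hκ v (consL m (0, ξ)) hb hb0 hx
  have hgu := hg.gu_ne_zero hb hx (u := κ (b, x)) (by linarith [hκ.bound b x hb hx])
  change fderiv ℂ g (q x) (0, consL m (1, 0)) ≠ 0 at hgu
  change leviTerm g v (consL m (0, ξ)) (q x) = 0 at hL
  simp only [leviTerm] at hL
  have lin2 : ∀ (a b : ℂ) (x y : Fin (m + 1) → ℂ),
      ((0, a • x + b • y) : (Fin (m + 1) → ℂ) × (Fin (m + 1) → ℂ)) = a • (0, x) + b • (0, y) := by
    intro a b x y; ext <;> simp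
  have lin1 : ∀ (a b : ℂ) (x y : Fin (m + 1) → ℂ),
      ((a • x - b • y, 0) : (Fin (m + 1) → ℂ) × (Fin (m + 1) → ℂ)) = a • (x, 0) - b • (y, 0) := by
    intro a b x y; ext <;> simp
  have h5 : fderiv ℂ g (q x) (0, consL m (0, ξ)) = -(k * fderiv ℂ g (q x) (0, consL m (1, 0))) := by
    have := lin2 1 k (consL m (0, ξ)) (consL m (1, 0))
    rw [one_smul, one_smul, ← hsplit] at this
    rw [this, map_add, map_smul, smul_eq_mul] at hg0
    linear_combination hg0
  have h6 : fderiv ℂ g (q x) (0, consL m (1, 0)) • consL m (0, ξ) -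
      fderiv ℂ g (q x) (0, consL m (0, ξ)) • consL m (1, 0) =
      fderiv ℂ g (q x) (0, consL m (1, 0)) • consL m (k, ξ) + (0 : ℂ) • 0 := by
    rw [h5, hsplit, smul_add, smul_smul]
    module
  rw [h6, lin2, zero_smul, add_zero, map_smul, lin1] at hL
  simp only [smul_apply, map_sub, map_smul, smul_eq_mul] at hL
  simp only [Pi.zero_apply, zero_apply]
  rw [div_eq_zero_iff]
  left
  refine (mul_eq_zero.1 ?_).resolve_left hgu
  linear_combination hL

end ScaledLevi

/-! ### The first integral of the rescaled hypersurface -/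

/-- The linear change of coordinates `(y', t) ↦ w` with `w₀ = t` and `wⱼ = t + y'ⱼ`. -/
noncomputable def shear (m : ℕ) : (Fin m → ℂ) × ℂ →L[ℂ] (Fin (m + 1) → ℂ) :=
  (consL m).comp ((ContinuousLinearMap.snd ℂ (Fin m → ℂ) ℂ).prod
    (ContinuousLinearMap.fst ℂ (Fin m → ℂ) ℂ +
      ContinuousLinearMap.pi fun _ => ContinuousLinearMap.snd ℂ (Fin m → ℂ) ℂ))

lemma shear_apply {m : ℕ} (y : Fin m → ℂ) (t : ℂ) :
    shear m (y, t) = consL m (t, fun j => y j + t) := by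
  simp only [shear, ContinuousLinearMap.comp_apply]
  congr 1

namespace ScaledLevi

variable {m : ℕ} {g : (Fin (m + 1) → ℂ) × (Fin (m + 1) → ℂ) → ℂ}
  {κ : (Fin (m + 1) → ℂ) × (Fin m → ℂ) → ℂ}

lemma analyticAt_integral (hκ : IsSolution g κ) {b : Fin (m + 1) → ℂ} (hb : ‖b‖ < 2) :
    AnalyticAt ℂ (fun b => κ (b, fun _ => 1)) b :=
  AnalyticAt.fun_comp (f := fun b => (b, fun _ => 1)) (x := b)
    (hκ.analytic (b, fun _ => 1) ⟨mem_ball_zero_iff.2 hb, one_mem_polyAnn m⟩)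
    (analyticAt_id.prod analyticAt_const)

/-- Implicit differentiation of `g (b, (κ (b, 1), 1)) = 0` with respect to `b`. -/
lemma fderiv_integral (hg : ScaledLevi m g) (hκ : IsSolution g κ) {b : Fin (m + 1) → ℂ}
    (hb : ‖b‖ < 2) (v : Fin (m + 1) → ℂ) :
    fderiv ℂ (fun b => κ (b, fun _ => 1)) b v *
        fderiv ℂ g (b, consL m (κ (b, fun _ => 1), fun _ => 1)) (0, consL m (1, 0)) +
      fderiv ℂ g (b, consL m (κ (b, fun _ => 1), fun _ => 1)) (v, 0) = 0 := by
  have h1p := one_mem_polyAnn m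
  set k := fderiv ℂ (fun b => κ (b, fun _ => 1)) b v with hk
  have hline : HasDerivAt (fun l : ℂ => b + l • v) v 0 := by
    simpa using ((hasDerivAt_id (0 : ℂ)).smul_const v).const_add b
  have hb0 : b + (0 : ℂ) • v = b := by simp
  have hκd : HasDerivAt (fun l : ℂ => κ (b + l • v, fun _ => 1)) k 0 :=
    (analyticAt_integral hκ hb).differentiableAt.hasFDerivAt.comp_hasDerivAt_of_eq 0 hline hb0.symm
  have hqd : HasDerivAt (fun l : ℂ => (b + l • v, consL m (κ (b + l • v, fun _ => 1), fun _ => 1)))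
      (v, consL m (k, 0)) 0 := by
    refine hline.prodMk ?_
    exact (consL m).hasFDerivAt.comp_hasDerivAt 0 (hκd.prodMk (hasDerivAt_const _ _))
  have h1 := (hg.analytic _ (mem_ball_kappa hκ hb h1p)).differentiableAt.hasFDerivAt.comp_hasDerivAt_of_eq
    0 hqd (by rw [hb0])
  have h2 : (g ∘ fun l : ℂ => (b + l • v, consL m (κ (b + l • v, fun _ => 1), fun _ => 1)))
      =ᶠ[𝓝 0] fun _ => 0 := by
    have hc : Continuous fun l : ℂ => ‖b + l • v‖ := by fun_prop
    filter_upwards [(hc.tendsto 0).eventually_lt_const (by rwa [hb0])] with l hl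
    exact hκ.zero _ _ hl h1p
  have h3 := h1.unique ((hasDerivAt_const (0 : ℂ) (0 : ℂ)).congr_of_eventuallyEq h2)
  have h4 : ((v, consL m (k, 0)) : (Fin (m + 1) → ℂ) × (Fin (m + 1) → ℂ)) =
      (v, 0) + k • (0, consL m (1, 0)) := by
    have : consL m (k, 0) = k • consL m (1, 0) := by rw [← map_smul]; simp
    rw [this]; ext <;> simp
  rw [h4, map_add, map_smul, smul_eq_mul] at h3
  linear_combination h3

/-- On the part of the zero set parametrised by `κ`, over `b` near `(i, 1, …, 1)`, the
differential of `b ↦ κ (b, 1)` is proportional to the `z`-differential of `g`. -/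
lemma wedge_zero (hg : ScaledLevi m g) (hκ : IsSolution g κ) {b : Fin (m + 1) → ℂ} (hb : ‖b‖ < 2)
    (hb0 : b 0 ∈ Metric.ball Complex.I (1 / 2)) (hb1 : ‖∏ i : Fin m, b i.succ - 1‖ < 1 / 2)
    (v v' : Fin (m + 1) → ℂ) {x : Fin m → ℂ} (hx : x ∈ polyAnn m) {u : ℂ}
    (hu : ‖u‖ ≤ 4 ^ (m + 1)) (h0 : g (b, consL m (u, x)) = 0) :
    fderiv ℂ (fun b => κ (b, fun _ => 1)) b v * fderiv ℂ g (b, consL m (u, x)) (v', 0) -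
      fderiv ℂ (fun b => κ (b, fun _ => 1)) b v' * fderiv ℂ g (b, consL m (u, x)) (v, 0) = 0 := by
  have h4 := four_le m
  have h1p := one_mem_polyAnn m
  have hu' : u = κ (b, x) :=
    hg.zero_unique hb hx hu (hκ.bound b x hb hx).le h0 (hκ.zero b x hb hx)
  rw [hu']
  have hne : ∀ x ∈ polyAnn m,
      fderiv ℂ g (b, consL m (κ (b, x), x)) (consL m (1, 0), 0) ≠ 0 := by
    intro x hx
    have := hκ.bound b x hb hx
    exact hg.gz_ne_zero (mem_ball_of _ (by linarith) hb hx (by linarith)) hb1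
  have hgu := hg.gu_ne_zero hb h1p (u := κ (b, fun _ => 1))
    (by linarith [hκ.bound b (fun _ => 1) hb h1p])
  have r := hg.ratio_const hκ hb hb0 hb1 v hx h1p
  have r' := hg.ratio_const hκ hb hb0 hb1 v' hx h1p
  rw [div_eq_div_iff (hne x hx) (hne _ h1p)] at r r'
  have d := hg.fderiv_integral hκ hb v
  have d' := hg.fderiv_integral hκ hb v'
  have n1 := hne _ h1p
  have n2 := hne _ hx
  generalize fderiv ℂ (fun b => κ (b, fun _ => 1)) b v = A at *
  generalize fderiv ℂ (fun b => κ (b, fun _ => 1)) b v' = A' at *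
  generalize fderiv ℂ g (b, consL m (κ (b, fun _ => 1), fun _ => 1)) (0, consL m (1, 0)) = B at *
  generalize fderiv ℂ g (b, consL m (κ (b, fun _ => 1), fun _ => 1)) (v, 0) = N1 at *
  generalize fderiv ℂ g (b, consL m (κ (b, fun _ => 1), fun _ => 1)) (v', 0) = N1' at *
  generalize fderiv ℂ g (b, consL m (κ (b, fun _ => 1), fun _ => 1)) (consL m (1, 0), 0) = E1 at *
  generalize fderiv ℂ g (b, consL m (κ (b, x), x)) (v, 0) = N at *
  generalize fderiv ℂ g (b, consL m (κ (b, x), x)) (v', 0) = N' at *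
  generalize fderiv ℂ g (b, consL m (κ (b, x), x)) (consL m (1, 0), 0) = E at *
  refine (mul_eq_zero.1 (?_ : (B * E1) * _ = 0)).resolve_left (mul_ne_zero hgu n1)
  linear_combination E1 * N' * d - E1 * N * d' - N1 * r' + N1' * r

/-- The base point `(i, 1, …, 1)`. -/
noncomputable def basePt (m : ℕ) : Fin (m + 1) → ℂ := consL m (Complex.I, fun _ => 1)

lemma norm_basePt_le (m : ℕ) : ‖basePt m‖ ≤ 1 := by
  rw [pi_norm_le_iff_of_nonneg zero_le_one]
  intro i
  refine Fin.cases ?_ (fun j => ?_) i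
  · simp [basePt, consL_zero]
  · simp [basePt, consL_succ]

lemma fderiv_integral_ne_zero (hg : ScaledLevi m g) (hκ : IsSolution g κ) :
    fderiv ℂ (fun b => κ (b, fun _ => 1)) (basePt m) ≠ 0 := by
  intro h
  have h4 := four_le m
  have h1p := one_mem_polyAnn m
  have hb : ‖basePt m‖ < 2 := by linarith [norm_basePt_le m]
  have := hg.fderiv_integral hκ hb (consL m (1, 0))
  rw [h, zero_apply, zero_mul, zero_add] at this
  refine hg.gz_ne_zero (mem_ball_of _ (by linarith) hb h1p ?_) ?_ this
  · linarith [hκ.bound (basePt m) _ hb h1p]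
  · simp [basePt, consL_succ]

/-- At the base point, the zeros of `t ↦ g (b, (t, …, t))` are simple and lie in the annulus
`1/2 < |t| < 2`, because `g` is close to `tⁿ + i` there. -/
lemma zeros_basePt (hg : ScaledLevi m g) {t : ℂ} (ht : ‖t‖ ≤ 3)
    (h0 : g (basePt m, shear m (0, t)) = 0) :
    (1 / 2 < ‖t‖ ∧ ‖t‖ < 2) ∧
      fderiv ℂ g (basePt m, shear m (0, t)) (0, shear m (0, 1)) ≠ 0 := by
  have h4 := four_le m
  have hq := quarter_le m
  have hb := norm_basePt_le m
  have hsh : ∀ t : ℂ, shear m (0, t) = fun _ => t := by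
    intro t
    rw [shear_apply]
    ext i
    refine Fin.cases ?_ (fun j => ?_) i
    · simp [consL_zero]
    · simp [consL_succ]
  have hp : ‖(basePt m, shear m (0, t))‖ < 4 ^ (m + 1) + 1 := by
    rw [Prod.norm_def]
    refine max_lt (by dsimp only; linarith) ?_
    dsimp only
    rw [hsh, pi_norm_lt_iff (by linarith)]
    intro i; linarith
  have hprod : ∏ i, basePt m i = Complex.I := by simp [basePt, prod_consL]
  have h1 := hg.close _ (mem_ball_zero_iff.2 (hp.trans (by linarith)))
  rw [h0, hprod, hsh] at h1
  simp only [Finset.prod_const, Finset.card_univ, Fintype.card_fin, zero_sub, norm_neg] at h1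
  have h2 : ‖t‖ ^ (m + 1) ≤ 5 / 4 := by
    calc ‖t‖ ^ (m + 1) = ‖(Complex.I + t ^ (m + 1)) - Complex.I‖ := by rw [← norm_pow]; ring_nf
      _ ≤ ‖Complex.I + t ^ (m + 1)‖ + ‖Complex.I‖ := norm_sub_le _ _
      _ ≤ _ := by rw [Complex.norm_I]; linarith
  have h3 : 3 / 4 ≤ ‖t‖ ^ (m + 1) := by
    have : ‖Complex.I‖ ≤ ‖Complex.I + t ^ (m + 1)‖ + ‖t ^ (m + 1)‖ := by
      calc ‖Complex.I‖ = ‖(Complex.I + t ^ (m + 1)) - t ^ (m + 1)‖ := by ring_nf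
        _ ≤ _ := norm_sub_le _ _
    rw [Complex.norm_I, norm_pow t] at this
    linarith
  have h5 : ‖t‖ < 2 := by
    by_contra hcon
    push Not at hcon
    have : (2 : ℝ) ^ (m + 1) ≤ ‖t‖ ^ (m + 1) := pow_le_pow_left₀ (by norm_num) hcon _
    rw [pow_succ] at this
    have h6 : (1 : ℝ) ≤ 2 ^ m := one_le_pow₀ (by norm_num)
    linarith
  have h6 : 1 / 2 < ‖t‖ := by
    by_contra hcon
    push Not at hcon
    have : ‖t‖ ^ (m + 1) ≤ (1 / 2) ^ (m + 1) := pow_le_pow_left₀ (norm_nonneg _) hcon _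
    rw [pow_succ (1 / 2 : ℝ)] at this
    have h6 : (1 / 2 : ℝ) ^ m ≤ 1 := pow_le_one₀ (by norm_num) (by norm_num)
    linarith
  refine ⟨⟨h6, h5⟩, fun hd => ?_⟩
  have h7 : ‖fderiv ℂ g (basePt m, shear m (0, t)) (0, shear m (0, 1)) - (m + 1) * t ^ m‖
      ≤ (1 / 4) ^ (m + 1) := by
    refine hg.norm_fderiv_sub_le hp ?_ (P := fun l => Complex.I + (t + l) ^ (m + 1)) (by fun_prop)
      ?_ ?_
    · rw [Prod.norm_def, hsh]
      refine max_le (by simp) ?_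
      rw [pi_norm_le_iff_of_nonneg zero_le_one]
      simp
    · simpa using (((hasDerivAt_id (0 : ℂ)).const_add t).pow (m + 1)).const_add Complex.I
    · intro l
      simp [hsh, hprod]
  rw [hd, zero_sub, norm_neg, norm_mul, norm_pow] at h7
  have h8 : (1 : ℝ) ≤ ‖(m + 1 : ℂ)‖ := by
    have : (m + 1 : ℂ) = ((m + 1 : ℝ) : ℂ) := by push_cast; rfl
    rw [this, Complex.norm_real, Real.norm_of_nonneg (by positivity)]
    linarith [(Nat.cast_nonneg m : (0 : ℝ) ≤ m)]
  have h9 : ‖t‖ ^ m ≤ ‖(m + 1 : ℂ)‖ * ‖t‖ ^ m := le_mul_of_one_le_left (by positivity) h8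
  have h10 : ‖t‖ ^ (m + 1) ≤ ‖t‖ ^ m * 2 := by
    rw [pow_succ]; gcongr
  linarith

/-- Existence of a first integral `h` depending on `z` only. Proportionality of `dh` and `∂_z g` is
known on the part of the zero set covered by `wedge_zero`, which contains all zeros of `g` on the
lines `t ↦ (b, (t, t + y'))` for `(b, y')` near `(basePt, 0)`; `division_extend` carries it to the
zeros near the origin. -/
theorem exists_integral (hg : ScaledLevi m g) :
    ∃ h : (Fin (m + 1) → ℂ) → ℂ, AnalyticOnNhd ℂ h (Metric.ball 0 2) ∧
      (∃ b ∈ Metric.ball 0 2, fderiv ℂ h b ≠ 0) ∧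
      ∀ b w : Fin (m + 1) → ℂ, ‖b‖ < 3 / 2 → ‖w‖ < 1 / 8 → g (b, w) = 0 →
        ∀ v v', fderiv ℂ h b v * fderiv ℂ g (b, w) (v', 0) -
          fderiv ℂ h b v' * fderiv ℂ g (b, w) (v, 0) = 0 := by
  obtain ⟨κ, hκ1, hκ2⟩ := hg.exists_kappa
  have hκ : IsSolution g κ :=
    ⟨hκ1, fun b x hb hx => (hκ2 b x hb hx).1, fun b x hb hx => (hκ2 b x hb hx).2⟩
  have h4 := four_le m
  have hq := quarter_le m
  have hbn := norm_basePt_le m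
  set h : (Fin (m + 1) → ℂ) → ℂ := fun b => κ (b, fun _ => 1) with hh
  have hha : AnalyticOnNhd ℂ h (Metric.ball 0 2) := fun b hb =>
    analyticAt_integral hκ (mem_ball_zero_iff.1 hb)
  refine ⟨h, hha, ⟨basePt m, mem_ball_zero_iff.2 (by linarith),
    hg.fderiv_integral_ne_zero hκ⟩, ?_⟩
  intro b w hb hw h0 v v'
  set Ω : Set ((Fin (m + 1) → ℂ) × (Fin m → ℂ)) :=
    Metric.ball 0 (3 / 2) ×ˢ Metric.ball 0 (1 / 4) with hΩ
  set pt : ((Fin (m + 1) → ℂ) × (Fin m → ℂ)) × ℂ → (Fin (m + 1) → ℂ) × (Fin (m + 1) → ℂ) :=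
    fun y => (y.1.1, shear m (y.1.2, y.2)) with hpt
  have hpta : ∀ y, AnalyticAt ℂ pt y := fun y =>
    (analyticAt_fst.fun_comp analyticAt_fst).prod (((shear m).analyticAt _).fun_comp
      ((analyticAt_snd.fun_comp analyticAt_fst).prod analyticAt_snd))
  have hptm : ∀ y ∈ Ω ×ˢ Metric.closedBall (0 : ℂ) 3, ‖pt y‖ < 4 ^ (m + 1) + 1 := by
    rintro ⟨⟨b, y⟩, t⟩ ⟨⟨h1, h2⟩, h3⟩
    simp only [mem_ball_zero_iff, mem_closedBall_zero_iff] at h1 h2 h3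
    simp only [hpt, Prod.norm_def]
    refine max_lt (by linarith) ?_
    rw [shear_apply]
    refine norm_consL_lt (by linarith) (by linarith) fun i => ?_
    calc ‖y i + t‖ ≤ ‖y i‖ + ‖t‖ := norm_add_le _ _
      _ ≤ ‖y‖ + ‖t‖ := by gcongr; exact norm_le_pi_norm y i
      _ < _ := by linarith
  have hga : ∀ y ∈ Ω ×ˢ Metric.closedBall (0 : ℂ) 3, AnalyticAt ℂ g (pt y) := fun y hy =>
    hg.analytic _ (mem_ball_zero_iff.2 (by linarith [hptm y hy]))
  set G : ((Fin (m + 1) → ℂ) × (Fin m → ℂ)) × ℂ → ℂ := fun y => g (pt y) with hG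
  set D : ((Fin (m + 1) → ℂ) × (Fin m → ℂ)) × ℂ → ℂ := fun y =>
    fderiv ℂ h y.1.1 v * fderiv ℂ g (pt y) (v', 0) -
      fderiv ℂ h y.1.1 v' * fderiv ℂ g (pt y) (v, 0) with hD
  have hGa : AnalyticOnNhd ℂ G (Ω ×ˢ Metric.closedBall 0 3) := fun y hy =>
    (hga y hy).fun_comp (hpta y)
  have hDa : AnalyticOnNhd ℂ D (Ω ×ˢ Metric.closedBall 0 3) := by
    intro y hy
    have e1 : ∀ a, AnalyticAt ℂ (fun y => fderiv ℂ g (pt y) a) y := fun a =>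
      analyticAt_clm_apply ((hga y hy).fderiv.fun_comp (hpta y)) analyticAt_const
    have e2 : ∀ a, AnalyticAt ℂ
        (fun y : ((Fin (m + 1) → ℂ) × (Fin m → ℂ)) × ℂ => fderiv ℂ h y.1.1 a) y := fun a =>
      analyticAt_clm_apply (AnalyticAt.fun_comp (x := y)
        (f := fun y : ((Fin (m + 1) → ℂ) × (Fin m → ℂ)) × ℂ => y.1.1)
        (hha y.1.1 (Metric.ball_subset_ball (by norm_num) hy.1.1)).fderiv
        (analyticAt_fst.fun_comp analyticAt_fst)) analyticAt_const
    exact ((e2 _).mul (e1 _)).sub ((e2 _).mul (e1 _))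
  have hs : ∀ y ∈ Ω, ∀ τ ∈ Metric.sphere (0 : ℂ) 3, G (y, τ) ≠ 0 := by
    rintro ⟨b, y⟩ hy τ hτ hz
    have hm := hptm ((b, y), τ) ⟨hy, Metric.sphere_subset_closedBall hτ⟩
    have h1 := hg.close _ (mem_ball_zero_iff.2 (hm.trans (by linarith)))
    change g (pt ((b, y), τ)) = 0 at hz
    rw [hz] at h1
    obtain ⟨hy1, hy2⟩ := hy
    simp only [mem_ball_zero_iff] at hy1 hy2
    rw [mem_sphere_zero_iff_norm] at hτ
    simp only [hpt, shear_apply, prod_consL, zero_sub, norm_neg] at h1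
    have h2 : (11 / 4 : ℝ) ^ m ≤ ‖∏ i, (y i + τ)‖ := by
      have hpow : (11 / 4 : ℝ) ^ m = ∏ _i : Fin m, (11 / 4 : ℝ) := by
        rw [Finset.prod_const, Finset.card_univ, Fintype.card_fin]
      rw [norm_prod, hpow]
      refine Finset.prod_le_prod (fun _ _ => by norm_num) fun i _ => ?_
      have e1 : ‖τ‖ ≤ ‖y i + τ‖ + ‖y i‖ := by
        calc ‖τ‖ = ‖(y i + τ) - y i‖ := by ring_nf
          _ ≤ _ := norm_sub_le _ _
      have := norm_le_pi_norm y i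
      linarith
    have h3 : ‖∏ i, b i‖ ≤ (3 / 2) ^ (m + 1) :=
      norm_prod_le_pow fun i => ((norm_le_pi_norm b i).trans hy1.le)
    have h5 : (3 / 2 : ℝ) ^ m ≤ (11 / 4) ^ m := pow_le_pow_left₀ (by norm_num) (by norm_num) m
    have h6 : (1 : ℝ) ≤ (3 / 2) ^ m := one_le_pow₀ (by norm_num)
    have h7 : ‖τ * ∏ i, (y i + τ)‖ ≤ ‖∏ i, b i + τ * ∏ i, (y i + τ)‖ + ‖∏ i, b i‖ := by
      calc ‖τ * ∏ i, (y i + τ)‖ = ‖(∏ i, b i + τ * ∏ i, (y i + τ)) - ∏ i, b i‖ := by ring_nf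
        _ ≤ _ := norm_sub_le _ _
    rw [norm_mul τ, hτ] at h7
    rw [pow_succ] at h3
    linarith
  set y₀ : (Fin (m + 1) → ℂ) × (Fin m → ℂ) := (basePt m, 0) with hy₀
  have hy₀Ω : y₀ ∈ Ω := ⟨mem_ball_zero_iff.2 (by simp only [hy₀]; linarith), by simp [hy₀]⟩
  have hGd : ∀ y ∈ Ω, ∀ t ∈ Metric.closedBall (0 : ℂ) 3,
      HasDerivAt (fun t => G (y, t)) (fderiv ℂ g (pt (y, t)) (0, shear m (0, 1))) t := by
    intro y hy t ht
    have e1 : HasDerivAt (fun t : ℂ => pt (y, t)) (0, shear m (0, 1)) t :=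
      (hasDerivAt_const t y.1).prodMk ((shear m).hasFDerivAt.comp_hasDerivAt t
        ((hasDerivAt_const t y.2).prodMk (hasDerivAt_id t)))
    exact (hga (y, t) ⟨hy, ht⟩).differentiableAt.hasFDerivAt.comp_hasDerivAt t e1
  have hevΩ : ∀ᶠ y in 𝓝 y₀, y ∈ Ω :=
    (Metric.isOpen_ball.prod Metric.isOpen_ball).mem_nhds hy₀Ω
  have hev1 : ∀ᶠ y in 𝓝 y₀, y.1 0 ∈ Metric.ball Complex.I (1 / 2) ∧
      ‖∏ i : Fin m, y.1 i.succ - 1‖ < 1 / 2 := by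
    refine Filter.Eventually.and ?_ ?_
    · have hc : Continuous fun y : (Fin (m + 1) → ℂ) × (Fin m → ℂ) => y.1 0 := by fun_prop
      refine (hc.tendsto y₀).eventually (Metric.isOpen_ball.mem_nhds ?_)
      simp [hy₀, basePt, consL_zero]
    · have hc : Continuous fun y : (Fin (m + 1) → ℂ) × (Fin m → ℂ) =>
        ‖∏ i : Fin m, y.1 i.succ - 1‖ := by fun_prop
      refine (hc.tendsto y₀).eventually_lt_const ?_
      simp [hy₀, basePt, consL_succ]
  have hev2 : ∀ᶠ y in 𝓝 y₀, ∀ t ∈ Metric.closedBall (0 : ℂ) 3, G (y, t) = 0 →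
      (fun j => y.2 j + t) ∈ polyAnn m ∧ fderiv ℂ g (pt (y, t)) (0, shear m (0, 1)) ≠ 0 := by
    refine (isCompact_closedBall (0 : ℂ) 3).eventually_forall_of_forall_eventually
      (P := fun y t => G (y, t) = 0 →
        (fun j => y.2 j + t) ∈ polyAnn m ∧ fderiv ℂ g (pt (y, t)) (0, shear m (0, 1)) ≠ 0) ?_
    intro t ht
    by_cases hz : G (y₀, t) = 0
    · obtain ⟨e1, e2⟩ := hg.zeros_basePt (mem_closedBall_zero_iff.1 ht) hz
      have e3 : ∀ᶠ z : ((Fin (m + 1) → ℂ) × (Fin m → ℂ)) × ℂ in 𝓝 (y₀, t),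
          (fun j => z.1.2 j + z.2) ∈ polyAnn m := by
        have hc : Continuous fun z : ((Fin (m + 1) → ℂ) × (Fin m → ℂ)) × ℂ =>
          (fun j => z.1.2 j + z.2 : Fin m → ℂ) := by fun_prop
        refine (hc.tendsto (y₀, t)).eventually ((isOpen_polyAnn m).mem_nhds ?_)
        rw [mem_polyAnn]
        intro i
        simpa [hy₀] using e1
      have e4 : ContinuousAt (fun z => fderiv ℂ g (pt z) (0, shear m (0, 1))) (y₀, t) :=
        (analyticAt_clm_apply ((hga (y₀, t) ⟨hy₀Ω, ht⟩).fderiv.fun_comp (hpta (y₀, t)))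
          analyticAt_const).continuousAt
      filter_upwards [e3, e4.eventually_ne e2] with z hz1 hz2 _
      exact ⟨hz1, hz2⟩
    · filter_upwards [(hGa (y₀, t) ⟨hy₀Ω, ht⟩).continuousAt.eventually_ne hz] with z hz1 hz2
      exact absurd hz2 hz1
  have hev : ∀ᶠ y in 𝓝 y₀, ∀ t ∈ Metric.closedBall (0 : ℂ) 3, G (y, t) = 0 →
      D (y, t) = 0 ∧ deriv (fun t => G (y, t)) t ≠ 0 := by
    filter_upwards [hevΩ, hev1, hev2] with y hy1 hy2 hy3 t ht hz
    obtain ⟨e1, e2⟩ := hy3 t ht hz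
    refine ⟨?_, by rw [(hGd y hy1 t ht).deriv]; exact e2⟩
    have hyb : ‖y.1‖ < 2 := by
      have := mem_ball_zero_iff.1 hy1.1
      linarith
    have hz' : g (y.1, consL m (t, fun j => y.2 j + t)) = 0 := by
      rw [← shear_apply]; exact hz
    have := hg.wedge_zero hκ hyb hy2.1 hy2.2 v v' e1
      (by linarith [mem_closedBall_zero_iff.1 ht]) hz'
    rw [← shear_apply] at this
    exact this
  have hconv : Convex ℝ Ω := (convex_ball _ _).prod (convex_ball _ _)
  have hw0 := norm_le_pi_norm w 0
  have hyΩ : (b, fun j : Fin m => w j.succ - w 0) ∈ Ω := by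
    refine ⟨mem_ball_zero_iff.2 hb, mem_ball_zero_iff.2 ?_⟩
    dsimp only
    rw [pi_norm_lt_iff (by norm_num)]
    intro j
    have := norm_le_pi_norm w j.succ
    linarith [norm_sub_le (w j.succ) (w 0)]
  have hptw : pt ((b, fun j : Fin m => w j.succ - w 0), w 0) = (b, w) := by
    simp only [hpt, shear_apply, sub_add_cancel, consL_self]
  have := division_extend (Metric.isOpen_ball.prod Metric.isOpen_ball) hconv (by norm_num) hGa hDa
    hs hy₀Ω hev hyΩ (t := w 0) (mem_ball_zero_iff.2 (by linarith)) (by simp only [hG, hptw, h0])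
  simpa only [hD, hptw] using this

end ScaledLevi

/-! ### The Levi condition in terms of the complexification -/

lemma sum_single_mul {n : ℕ} (L : (Fin n → ℂ) →L[ℂ] ℂ) (v : Fin n → ℂ) :
    ∑ i, L (Pi.single i 1) * v i = L v := by
  conv_rhs => rw [← Finset.univ_sum_single v, map_sum]
  refine Finset.sum_congr rfl fun i _ => ?_
  have : Pi.single i (v i) = v i • (Pi.single i 1 : Fin n → ℂ) := by
    rw [← Pi.single_smul]; simp
  rw [this, map_smul, smul_eq_mul, mul_comm]

/-- Chain rule along the totally real subspace `w = z̄`. -/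
lemma hasFDerivAt_totallyReal {n : ℕ} {Φ : (Fin n → ℂ) × (Fin n → ℂ) → ℂ} {p : Fin n → ℂ}
    (hΦ : DifferentiableAt ℂ Φ (p, star p)) :
    HasFDerivAt (𝕜 := ℝ) (fun z => Φ (z, star z))
      (((fderiv ℂ Φ (p, star p)).restrictScalars ℝ).comp
        ((ContinuousLinearMap.id ℝ (Fin n → ℂ)).prod
          (starL' ℝ : (Fin n → ℂ) ≃L[ℝ] (Fin n → ℂ)).toContinuousLinearMap)) p := by
  have h1 : HasFDerivAt (𝕜 := ℝ) (fun z : Fin n → ℂ => (z, star z))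
      ((ContinuousLinearMap.id ℝ (Fin n → ℂ)).prod
          (starL' ℝ : (Fin n → ℂ) ≃L[ℝ] (Fin n → ℂ)).toContinuousLinearMap) p :=
    (hasFDerivAt_id p).prodMk
      (starL' ℝ : (Fin n → ℂ) ≃L[ℝ] (Fin n → ℂ)).toContinuousLinearMap.hasFDerivAt
  exact HasFDerivAt.comp (f := fun z : Fin n → ℂ => (z, star z)) p
    (hΦ.hasFDerivAt.restrictScalars ℝ) h1

lemma fderiv_totallyReal {n : ℕ} {Φ : (Fin n → ℂ) × (Fin n → ℂ) → ℂ} {p : Fin n → ℂ}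
    (hΦ : DifferentiableAt ℂ Φ (p, star p)) (v : Fin n → ℂ) :
    fderiv ℝ (fun z => Φ (z, star z)) p v =
      fderiv ℂ Φ (p, star p) (v, 0) + fderiv ℂ Φ (p, star p) (0, star v) := by
  rw [(hasFDerivAt_totallyReal hΦ).fderiv, ← map_add]
  simp

lemma wirt_aux {n : ℕ} (L : (Fin n → ℂ) × (Fin n → ℂ) →L[ℂ] ℂ) (v : Fin n → ℂ) :
    L (Complex.I • v, 0) = Complex.I * L (v, 0) ∧
    L (0, star (Complex.I • v)) = - (Complex.I * L (0, star v)) := by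
  constructor
  · rw [← smul_eq_mul, ← map_smul]; simp
  · rw [← smul_eq_mul, ← map_smul, ← map_neg]
    simp [star_smul]

lemma single_I {n : ℕ} (j : Fin n) :
    (Pi.single j Complex.I : Fin n → ℂ) = Complex.I • (Pi.single j 1 : Fin n → ℂ) := by
  rw [← Pi.single_smul]; simp

lemma wirtZ_totallyReal {n : ℕ} {Φ : (Fin n → ℂ) × (Fin n → ℂ) → ℂ} {p : Fin n → ℂ}
    (hΦ : DifferentiableAt ℂ Φ (p, star p)) (j : Fin n) :
    wirtZ (fun z => Φ (z, star z)) j p = fderiv ℂ Φ (p, star p) (Pi.single j 1, 0) := by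
  rw [wirtZ, fderiv_totallyReal hΦ, fderiv_totallyReal hΦ, single_I, (wirt_aux _ _).1,
    (wirt_aux _ _).2]
  linear_combination (-1 / 2 * fderiv ℂ Φ (p, star p) (Pi.single j 1, 0) +
    1 / 2 * fderiv ℂ Φ (p, star p) (0, star (Pi.single j 1))) * Complex.I_mul_I

lemma wirtZbar_totallyReal {n : ℕ} {Φ : (Fin n → ℂ) × (Fin n → ℂ) → ℂ} {p : Fin n → ℂ}
    (hΦ : DifferentiableAt ℂ Φ (p, star p)) (j : Fin n) :
    wirtZbar (fun z => Φ (z, star z)) j p = fderiv ℂ Φ (p, star p) (0, Pi.single j 1) := by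
  have hs : star (Pi.single j 1 : Fin n → ℂ) = Pi.single j 1 := by
    rw [← Pi.single_star, star_one]
  rw [wirtZbar, fderiv_totallyReal hΦ, fderiv_totallyReal hΦ, single_I, (wirt_aux _ _).1,
    (wirt_aux _ _).2, hs]
  linear_combination (1 / 2 * fderiv ℂ Φ (p, star p) (Pi.single j 1, 0) -
    1 / 2 * fderiv ℂ Φ (p, star p) (0, Pi.single j 1)) * Complex.I_mul_I

/-- Polarization: a form that is linear in its first and conjugate-linear in its second argument
and vanishes on the diagonal of a subspace vanishes on that subspace. -/
lemma polarization {n : ℕ}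
    (B : (Fin n → ℂ) × (Fin n → ℂ) →L[ℂ] (Fin n → ℂ) × (Fin n → ℂ) →L[ℂ] ℂ)
    (L : (Fin n → ℂ) →L[ℂ] ℂ) (h : ∀ v, L v = 0 → B (0, star v) (v, 0) = 0)
    {u v : Fin n → ℂ} (hu : L u = 0) (hv : L v = 0) : B (0, star v) (u, 0) = 0 := by
  have e : ∀ (a b : ℂ) (x y : Fin n → ℂ), ((0 : Fin n → ℂ), a • x + b • y) =
      a • ((0 : Fin n → ℂ), x) + b • ((0 : Fin n → ℂ), y) := by intros; simp
  have e' : ∀ (a b : ℂ) (x y : Fin n → ℂ), (a • x + b • y, (0 : Fin n → ℂ)) =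
      a • (x, (0 : Fin n → ℂ)) + b • (y, (0 : Fin n → ℂ)) := by intros; simp
  have key : ∀ c : ℂ, c * B (0, star u) (v, 0) + star c * B (0, star v) (u, 0) = 0 := by
    intro c
    have h1 := h ((1 : ℂ) • u + c • v) (by simp [hu, hv])
    rw [star_add, star_smul, star_smul, e, e'] at h1
    simp only [map_add, map_smul, add_apply, smul_apply, smul_eq_mul, h u hu, h v hv,
      star_one] at h1
    linear_combination h1
  have k1 := key 1
  have k2 := key Complex.I
  simp only [star_one, Complex.star_def, Complex.conj_I] at k1 k2
  linear_combination (1 / 2) * k1 + (Complex.I / 2) * k2 +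
    (- B (0, star u) (v, 0) / 2 + B (0, star v) (u, 0) / 2) * Complex.I_mul_I

/-- Levi-flatness of `{F = 0}` in terms of the complexification: at the points of the totally real
subspace, the mixed second derivative vanishes on `ker ∂_z F_ℂ × ker ∂_w F_ℂ`. -/
lemma levi_complexification {n : ℕ} {F : (Fin n → ℂ) → ℝ}
    {FC : (Fin n → ℂ) × (Fin n → ℂ) → ℂ} (hF : AnalyticAt ℝ F 0) (hLF : LeviFlatGerm F)
    (hFC : IsComplexification F FC) :
    ∀ᶠ z in 𝓝 (0 : Fin n → ℂ), FC (z, star z) = 0 → (∃ v, fderiv ℂ FC (z, star z) (v, 0) ≠ 0) →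
      ∀ U P, fderiv ℂ FC (z, star z) (U, 0) = 0 → fderiv ℂ FC (z, star z) (0, P) = 0 →
        fderiv ℂ (fderiv ℂ FC) (z, star z) (0, P) (U, 0) = 0 := by
  have ht : Tendsto (fun z : Fin n → ℂ => (z, star z)) (𝓝 0) (𝓝 0) := by
    have : Continuous fun z : Fin n → ℂ => (z, star z) := by fun_prop
    have h := this.tendsto 0
    simp only [star_zero] at h
    exact h
  have han := ht.eventually hFC.1.eventually_analyticAt
  filter_upwards [hLF, han.eventually_nhds, hFC.2.eventually_nhds, hF.eventually_analyticAt]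
    with p hL hap heq hFp
  intro h0 ⟨v₀, hv₀⟩ U P hU hP
  have hap0 : AnalyticAt ℂ FC (p, star p) := hap.self_of_nhds
  have heqf : (fun z => ((F z : ℝ) : ℂ)) =ᶠ[𝓝 p] fun z => FC (z, star z) := by
    filter_upwards [heq] with z hz using hz.symm
  -- the real differential of `F` in terms of the complexification
  have hreal : ∀ v, fderiv ℂ FC (p, star p) (v, 0) + fderiv ℂ FC (p, star p) (0, star v) =
      ((fderiv ℝ F p v : ℝ) : ℂ) := by
    intro v
    rw [← fderiv_totallyReal hap0.differentiableAt, ← heqf.fderiv_eq]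
    have := (Complex.ofRealCLM.hasFDerivAt (x := F p)).comp p hFp.differentiableAt.hasFDerivAt
    change fderiv ℝ (Complex.ofRealCLM ∘ F) p v = _
    rw [this.fderiv]
    simp
  have hconj : ∀ v, fderiv ℂ FC (p, star p) (v, 0) =
      star (fderiv ℂ FC (p, star p) (0, star v)) := by
    intro v
    have a1 := hreal v
    have a2 := hreal (Complex.I • v)
    rw [(wirt_aux _ _).1, (wirt_aux _ _).2] at a2
    have b1 := congrArg Complex.im a1
    have b2 := congrArg Complex.im a2
    simp at b1 b2
    apply Complex.ext <;> simp <;> linarith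
  have hne : fderiv ℝ F p ≠ 0 := by
    intro h
    have a1 := hreal v₀
    have a2 := hreal (Complex.I • v₀)
    rw [(wirt_aux _ _).1, (wirt_aux _ _).2] at a2
    rw [h] at a1 a2
    simp only [zero_apply, Complex.ofReal_zero] at a1 a2
    apply hv₀
    linear_combination (1 / 2) * a1 - (Complex.I / 2) * a2 +
      (fderiv ℂ FC (p, star p) (v₀, 0) / 2 - fderiv ℂ FC (p, star p) (0, star v₀) / 2)
        * Complex.I_mul_I
  have hFp0 : F p = 0 := by
    have := heq.self_of_nhds
    rw [h0] at this
    exact_mod_cast this.symm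
  have hw : ∀ i, wirtZ (fun z => ((F z : ℝ) : ℂ)) i =ᶠ[𝓝 p]
      fun z => fderiv ℂ FC (z, star z) (Pi.single i 1, 0) := by
    intro i
    filter_upwards [heq.eventually_nhds, hap] with z hz haz
    have hz' : (fun z => ((F z : ℝ) : ℂ)) =ᶠ[𝓝 z] fun z => FC (z, star z) := by
      filter_upwards [hz] with y hy using hy.symm
    rw [← wirtZ_totallyReal haz.differentiableAt, wirtZ, wirtZ, hz'.fderiv_eq]
  have hww : ∀ i j, wirtZbar (wirtZ (fun z => ((F z : ℝ) : ℂ)) i) j p =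
      fderiv ℂ (fderiv ℂ FC) (p, star p) (0, Pi.single j 1) (Pi.single i 1, 0) := by
    intro i j
    have hd : HasFDerivAt (fun q => fderiv ℂ FC q (Pi.single i 1, 0))
        ((fderiv ℂ (fderiv ℂ FC) (p, star p)).flip (Pi.single i 1, 0)) (p, star p) := by
      have := hap0.fderiv.differentiableAt.hasFDerivAt.clm_apply
        (hasFDerivAt_const ((Pi.single i 1, 0) : (Fin n → ℂ) × (Fin n → ℂ)) (p, star p))
      simpa using this
    have e1 : wirtZbar (wirtZ (fun z => ((F z : ℝ) : ℂ)) i) j p =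
        wirtZbar (fun z => fderiv ℂ FC (z, star z) (Pi.single i 1, 0)) j p := by
      rw [wirtZbar, wirtZbar, (hw i).fderiv_eq]
    rw [e1, wirtZbar_totallyReal (Φ := fun q => fderiv ℂ FC q (Pi.single i 1, 0))
      hd.differentiableAt, hd.fderiv]
    rfl
  let L : (Fin n → ℂ) →L[ℂ] ℂ :=
    (fderiv ℂ FC (p, star p)).comp (ContinuousLinearMap.inl ℂ (Fin n → ℂ) (Fin n → ℂ))
  have hLv : ∀ v, L v = fderiv ℂ FC (p, star p) (v, 0) := fun v => rfl
  have hdiag : ∀ v, L v = 0 →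
      fderiv ℂ (fderiv ℂ FC) (p, star p) (0, star v) (v, 0) = 0 := by
    intro v hv
    have h1 := hL hFp0 hne v (by
      rw [← hv, ← sum_single_mul]
      refine Finset.sum_congr rfl fun j _ => ?_
      rw [(hw j).self_of_nhds, hLv])
    rw [← h1]
    let B := fderiv ℂ (fderiv ℂ FC) (p, star p)
    have s1 : B (0, star v) (v, 0) = ∑ i, B (0, star v) (Pi.single i 1, 0) * v i :=
      (sum_single_mul ((B (0, star v)).comp
        (ContinuousLinearMap.inl ℂ (Fin n → ℂ) (Fin n → ℂ))) v).symm
    have s2 : ∀ i, B (0, star v) (Pi.single i 1, 0) =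
        ∑ j, B (0, Pi.single j 1) (Pi.single i 1, 0) * star (v j) := fun i =>
      (sum_single_mul ((B.flip (Pi.single i 1, 0)).comp
        (ContinuousLinearMap.inr ℂ (Fin n → ℂ) (Fin n → ℂ))) (star v)).symm
    change B (0, star v) (v, 0) = _
    rw [s1]
    refine Finset.sum_congr rfl fun i _ => ?_
    rw [s2, Finset.sum_mul]
    refine Finset.sum_congr rfl fun j _ => ?_
    rw [hww, starRingEnd_apply]
    ring
  have hP' : L (star P) = 0 := by
    rw [hLv, hconj, star_star, hP, star_zero]
  have := polarization (fderiv ℂ (fderiv ℂ FC) (p, star p)) L hdiag hU hP'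
  rwa [star_star] at this

/-! ### Rescaling and the conclusion -/

lemma hasFDerivAt_scale {E G : Type*} [NormedAddCommGroup E] [NormedSpace ℂ E]
    [NormedAddCommGroup G] [NormedSpace ℂ G] {Φ : E → G} (c σ : ℂ) {p : E}
    (hΦ : DifferentiableAt ℂ Φ (σ • p)) :
    HasFDerivAt (fun q => c • Φ (σ • q)) ((c * σ) • fderiv ℂ Φ (σ • p)) p := by
  have h1 : HasFDerivAt (fun q : E => σ • q) (σ • ContinuousLinearMap.id ℂ E) p :=
    (hasFDerivAt_id p).const_smul σ
  have h2 := (HasFDerivAt.comp (f := fun q : E => σ • q) p hΦ.hasFDerivAt h1).const_smul c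
  refine h2.congr_fderiv ?_
  ext v
  simp [mul_smul]

/-- The rescaling `g(p) = 2 F_ℂ(s p) / sⁿ`, whose leading part is `∏ zᵢ + ∏ wᵢ`. -/
noncomputable def rescale {m : ℕ} (FC : (Fin (m + 1) → ℂ) × (Fin (m + 1) → ℂ) → ℂ) (s : ℝ) :
    (Fin (m + 1) → ℂ) × (Fin (m + 1) → ℂ) → ℂ :=
  fun p => (2 / (s : ℂ) ^ (m + 1)) • FC ((s : ℂ) • p)

/-- The terms of `F_ℂ` beyond `(∏ zᵢ + ∏ wᵢ) / 2` vanish to order `n + 1` in all variables. -/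
lemma complexification_isBigO {n : ℕ} {F H : (Fin n → ℂ) → ℝ}
    (hFeq : ∀ᶠ z in 𝓝 (0 : Fin n → ℂ), F z = (∏ i, z i).re + H z)
    (hHord : (fun z : Fin n → ℂ => H z) =O[𝓝 0] fun z => ‖z‖ ^ (n + 1))
    {FC : (Fin n → ℂ) × (Fin n → ℂ) → ℂ} (hFC : IsComplexification F FC) :
    (fun q : (Fin n → ℂ) × (Fin n → ℂ) => FC q - (∏ i, q.1 i + ∏ i, q.2 i) / 2)
      =O[𝓝 0] fun q => ‖q‖ ^ (n + 1) := by
  refine isBigO_of_totallyReal ?_ (n + 1) ?_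
  · refine hFC.1.fun_sub (AnalyticAt.fun_div (AnalyticAt.fun_add ?_ ?_) analyticAt_const two_ne_zero)
    · refine Finset.analyticAt_fun_prod _ fun i _ => ?_
      exact ((ContinuousLinearMap.proj (R := ℂ) (φ := fun _ : Fin n => ℂ) i).comp
        (ContinuousLinearMap.fst ℂ (Fin n → ℂ) (Fin n → ℂ))).analyticAt 0
    · refine Finset.analyticAt_fun_prod _ fun i _ => ?_
      exact ((ContinuousLinearMap.proj (R := ℂ) (φ := fun _ : Fin n => ℂ) i).comp
        (ContinuousLinearMap.snd ℂ (Fin n → ℂ) (Fin n → ℂ))).analyticAt 0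
  · have h1 : (fun z : Fin n → ℂ => ((H z : ℝ) : ℂ)) =O[𝓝 0] fun z => ‖z‖ ^ (n + 1) :=
      (hHord.norm_left.congr_left fun z => (Complex.norm_real _).symm).of_norm_left
    refine h1.congr' ?_ EventuallyEq.rfl
    filter_upwards [hFeq, hFC.2] with z h2 h3
    have h4 : ∏ i, star z i = star (∏ i, z i) := by
      simp [Pi.star_apply]
    have h5 : (((∏ i, z i).re : ℝ) : ℂ) = (∏ i, z i + star (∏ i, z i)) / 2 :=
      Complex.re_eq_add_conj _
    simp only [h3, h2, h4]
    rw [Complex.ofReal_add, h5]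
    ring

/-- The hypotheses on `F` provide the data of `ScaledLevi` at every sufficiently small scale. -/
lemma eventually_scaledLevi {m : ℕ} {F H : (Fin (m + 1) → ℂ) → ℝ} (hF : AnalyticAt ℝ F 0)
    (hFeq : ∀ᶠ z in 𝓝 (0 : Fin (m + 1) → ℂ), F z = (∏ i, z i).re + H z)
    (hHord : (fun z : Fin (m + 1) → ℂ => H z) =O[𝓝 0] fun z => ‖z‖ ^ (m + 1 + 1))
    (hLF : LeviFlatGerm F)
    {FC : (Fin (m + 1) → ℂ) × (Fin (m + 1) → ℂ) → ℂ} (hFC : IsComplexification F FC) :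
    ∀ᶠ s in 𝓝[>] (0 : ℝ), ScaledLevi m (rescale FC s) := by
  obtain ⟨C, hC, hK⟩ := (complexification_isBigO hFeq hHord hFC).exists_pos
  have hK' := hK.bound
  obtain ⟨ε, hε, h1⟩ := Metric.eventually_nhds_iff_ball.1
    (hK'.and hFC.1.eventually_analyticAt)
  obtain ⟨η, hη, h2⟩ := Metric.eventually_nhds_iff_ball.1
    (hFC.2.and (levi_complexification hF hLF hFC))
  set R : ℝ := 4 ^ (m + 1) + 2 with hR
  have hR0 : 0 < R := by positivity
  have t1 : ∀ᶠ s in 𝓝[>] (0 : ℝ), s * R < min ε η := by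
    have : Tendsto (fun s : ℝ => s * R) (𝓝[>] 0) (𝓝 (0 * R)) :=
      ((continuous_mul_const R).tendsto 0).mono_left nhdsWithin_le_nhds
    rw [zero_mul] at this
    exact this.eventually_lt_const (lt_min hε hη)
  have t2 : ∀ᶠ s in 𝓝[>] (0 : ℝ), s * (2 * C * R ^ (m + 2)) < (1 / 4) ^ (m + 1) := by
    have : Tendsto (fun s : ℝ => s * (2 * C * R ^ (m + 2))) (𝓝[>] 0)
        (𝓝 (0 * (2 * C * R ^ (m + 2)))) :=
      ((continuous_mul_const _).tendsto 0).mono_left nhdsWithin_le_nhds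
    rw [zero_mul] at this
    exact this.eventually_lt_const (by positivity)
  filter_upwards [t1, t2, self_mem_nhdsWithin] with s hs1 hs2 hs0
  have hs0 : 0 < s := hs0
  have hσ : (s : ℂ) ≠ 0 := by exact_mod_cast hs0.ne'
  have hnσ : ‖(s : ℂ)‖ = s := by rw [Complex.norm_real, Real.norm_of_nonneg hs0.le]
  have hc : (2 / (s : ℂ) ^ (m + 1)) ≠ 0 := div_ne_zero two_ne_zero (pow_ne_zero _ hσ)
  have hmem : ∀ {X : Type} [NormedAddCommGroup X] [NormedSpace ℂ X] (p : X), ‖p‖ < R →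
      ‖(s : ℂ) • p‖ < ε ∧ ‖(s : ℂ) • p‖ < η := by
    intro X _ _ p hp
    have : ‖(s : ℂ) • p‖ < s * R := by
      rw [norm_smul, hnσ]; gcongr
    exact lt_min_iff.1 (this.trans hs1)
  have hanalytic : ∀ p : (Fin (m + 1) → ℂ) × (Fin (m + 1) → ℂ), ‖p‖ < R →
      AnalyticAt ℂ FC ((s : ℂ) • p) := fun p hp =>
    (h1 _ (mem_ball_zero_iff.2 (hmem p hp).1)).2
  have hstar : ∀ z : Fin (m + 1) → ℂ, (s : ℂ) • (z, star z) =
      ((s : ℂ) • z, star ((s : ℂ) • z)) := by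
    intro z
    rw [star_smul]
    simp
  have hnstar : ∀ z : Fin (m + 1) → ℂ, ‖z‖ < R → ‖(z, star z)‖ < R := by
    intro z hz
    rw [Prod.norm_mk, norm_star, max_self]
    exact hz
  have hfd : ∀ p : (Fin (m + 1) → ℂ) × (Fin (m + 1) → ℂ), ‖p‖ < R → fderiv ℂ (rescale FC s) p =
      (2 / (s : ℂ) ^ (m + 1) * s) • fderiv ℂ FC ((s : ℂ) • p) := fun p hp =>
    (hasFDerivAt_scale _ _ (hanalytic p hp).differentiableAt).fderiv
  refine ⟨fun p hp => ?_, fun p hp => ?_, fun z hz => ?_, fun z hz h0 hv U P hU hP => ?_⟩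
  · rw [mem_ball_zero_iff] at hp
    refine AnalyticAt.fun_const_smul (AnalyticAt.fun_comp (f := fun q => (s : ℂ) • q) (x := p)
      (hanalytic p hp) ?_)
    exact (analyticAt_id).fun_const_smul
  · rw [mem_ball_zero_iff] at hp
    have h3 := (h1 _ (mem_ball_zero_iff.2 (hmem p hp).1)).1
    have h4 : rescale FC s p - (∏ i, p.1 i + ∏ i, p.2 i) = 2 / (s : ℂ) ^ (m + 1) *
        (FC ((s : ℂ) • p) - (∏ i, ((s : ℂ) • p).1 i + ∏ i, ((s : ℂ) • p).2 i) / 2) := by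
      simp only [rescale, smul_eq_mul, Prod.smul_fst, Prod.smul_snd, Pi.smul_apply,
        Finset.prod_mul_distrib, Finset.prod_const, Finset.card_univ, Fintype.card_fin]
      field_simp
    rw [h4, norm_mul, norm_div, norm_pow, hnσ, Complex.norm_two]
    rw [norm_pow, norm_norm, norm_smul, hnσ] at h3
    calc 2 / s ^ (m + 1) * _ ≤ 2 / s ^ (m + 1) * (C * (s * ‖p‖) ^ (m + 1 + 1)) := by gcongr
      _ ≤ 2 / s ^ (m + 1) * (C * (s * R) ^ (m + 1 + 1)) := by gcongr
      _ = s * (2 * C * R ^ (m + 2)) := by field_simp; ring_nf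
      _ ≤ _ := hs2.le
  · have h3 := (h2 _ (mem_ball_zero_iff.2 (hmem z hz).2)).1
    simp only [rescale, hstar, h3]
    rw [smul_eq_mul, show (2 / (s : ℂ) ^ (m + 1)) * ((F ((s : ℂ) • z) : ℝ) : ℂ) =
      ((2 / s ^ (m + 1) * F ((s : ℂ) • z) : ℝ) : ℂ) by push_cast; ring]
    exact Complex.ofReal_im _
  · have h3 := (h2 _ (mem_ball_zero_iff.2 (hmem z hz).2)).2
    have hz' := hnstar z hz
    have hk : (2 / (s : ℂ) ^ (m + 1) * s) ≠ 0 := mul_ne_zero hc hσ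
    have hfd2 : fderiv ℂ (fderiv ℂ (rescale FC s)) (z, star z) =
        ((2 / (s : ℂ) ^ (m + 1) * s) * s) • fderiv ℂ (fderiv ℂ FC) ((s : ℂ) • (z, star z)) := by
      have : fderiv ℂ (rescale FC s) =ᶠ[𝓝 (z, star z)] fun p =>
          (2 / (s : ℂ) ^ (m + 1) * s) • fderiv ℂ FC ((s : ℂ) • p) := by
        filter_upwards [Metric.isOpen_ball.mem_nhds (mem_ball_zero_iff.2 hz')] with p hp
        exact hfd p (mem_ball_zero_iff.1 hp)
      rw [this.fderiv_eq]
      exact (hasFDerivAt_scale _ _ (hanalytic _ hz').fderiv.differentiableAt).fderiv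
    rw [hfd _ hz', hstar, smul_apply, smul_eq_zero_iff_right hk] at hU hP
    obtain ⟨v, hv⟩ := hv
    rw [hfd _ hz', hstar, smul_apply, smul_ne_zero_iff_right hk] at hv
    simp only [rescale, hstar] at h0
    rw [smul_eq_zero_iff_right hc] at h0
    rw [hfd2, hstar, smul_apply, smul_apply, h3 h0 ⟨v, hv⟩ U P hU hP, smul_zero]

/-- The hypersurface `{F_ℂ = 0}` projects onto a neighbourhood of `0` in the `z`-space, even after
restriction to a small neighbourhood of `0`. -/
lemma exists_zero_above {m : ℕ} {FC : (Fin (m + 1) → ℂ) × (Fin (m + 1) → ℂ) → ℂ}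
    (hs : ∀ᶠ s in 𝓝[>] (0 : ℝ), ScaledLevi m (rescale FC s))
    {P : (Fin (m + 1) → ℂ) × (Fin (m + 1) → ℂ) → Prop} (hP : ∀ᶠ p in 𝓝 0, P p) :
    ∀ᶠ z in 𝓝 (0 : Fin (m + 1) → ℂ), ∃ w, FC (z, w) = 0 ∧ P (z, w) := by
  obtain ⟨δ, hδ, h1⟩ := Metric.eventually_nhds_iff_ball.1 hP
  have t1 : ∀ᶠ s in 𝓝[>] (0 : ℝ), s * 4 ^ (m + 1) < δ := by
    have : Tendsto (fun s : ℝ => s * 4 ^ (m + 1)) (𝓝[>] 0) (𝓝 (0 * 4 ^ (m + 1))) :=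
      ((continuous_mul_const _).tendsto 0).mono_left nhdsWithin_le_nhds
    rw [zero_mul] at this
    exact this.eventually_lt_const hδ
  obtain ⟨s, ⟨hg, hsδ⟩, hs0⟩ := ((hs.and t1).and self_mem_nhdsWithin).exists
  have hs0 : 0 < s := hs0
  have hσ : (s : ℂ) ≠ 0 := by exact_mod_cast hs0.ne'
  have hnσ : ‖(s : ℂ)‖ = s := by rw [Complex.norm_real, Real.norm_of_nonneg hs0.le]
  have h4 := four_le m
  filter_upwards [Metric.ball_mem_nhds (0 : Fin (m + 1) → ℂ) (ε := 2 * s) (by positivity),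
    Metric.ball_mem_nhds (0 : Fin (m + 1) → ℂ) hδ] with z hz hzδ
  rw [mem_ball_zero_iff] at hz hzδ
  have hb : ‖(s : ℂ)⁻¹ • z‖ < 2 := by
    rw [norm_smul, norm_inv, hnσ, inv_mul_lt_iff₀ hs0]; linarith
  obtain ⟨u, hu, hz0⟩ := hg.zero_exists hb (one_mem_polyAnn m)
  refine ⟨(s : ℂ) • consL m (u, fun _ => 1), ?_, h1 _ (mem_ball_zero_iff.2 ?_)⟩
  · rw [rescale, smul_eq_zero_iff_right (div_ne_zero two_ne_zero (pow_ne_zero _ hσ)),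
      Prod.smul_mk, smul_inv_smul₀ hσ] at hz0
    exact hz0
  · rw [Prod.norm_mk]
    refine max_lt hzδ (lt_trans ?_ hsδ)
    rw [norm_smul, hnσ]
    gcongr
    exact norm_consL_lt (by positivity) hu fun i => by rw [norm_one]; linarith

/-- **Proposition (for Theorem 3).** For `M = {Re(z₁⋯zₙ) + O(|z|^{n+1}) = 0}`, `n ≥ 3`,
with `Sing(M_ℂ)` the union of the subspaces `V_{ijkℓ}` and contained in the closure of
`Sing(L_ℂ)`, the complexified Levi foliation `L_ℂ` admits a non-constant holomorphic
first integral. -/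
theorem stmt_7 (n : ℕ) (hn : 3 ≤ n) (F H : (Fin n → ℂ) → ℝ)
    (hF : AnalyticAt ℝ F 0) (hH : AnalyticAt ℝ H 0)
    -- `F(z) = Re(z₁ ⋯ zₙ) + H(z, z̄)` with `H = O(|z|^{n+1})`
    (hFeq : ∀ᶠ z in 𝓝 (0 : Fin n → ℂ), F z = (∏ i, z i).re + H z)
    (hHord : (fun z : Fin n → ℂ => H z) =O[𝓝 0] fun z => ‖z‖ ^ (n + 1))
    -- `M = {F = 0}` is a singular hypersurface at `0`
    (hF0 : F 0 = 0) (hsing : fderiv ℝ F 0 = 0)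
    (hirr : IrreducibleRGerm F)
    (hLF : LeviFlatGerm F)
    (FC : ((Fin n → ℂ) × (Fin n → ℂ)) → ℂ) (hFC : IsComplexification F FC)
    -- `Sing(M_ℂ)` is the union of the subspaces `V_{ijkℓ} = {z_i = z_j = w_k = w_ℓ = 0}`
    (hSingMC : ∀ᶠ p in 𝓝 (0 : (Fin n → ℂ) × (Fin n → ℂ)),
      (p ∈ singMC FC ↔ ∃ i j k l : Fin n, i < j ∧ k < l ∧
        p.1 i = 0 ∧ p.1 j = 0 ∧ p.2 k = 0 ∧ p.2 l = 0))
    -- `Sing(M_ℂ)` is contained in the closure of `Sing(L_ℂ)`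
    (hcl : ∃ U ∈ 𝓝 (0 : (Fin n → ℂ) × (Fin n → ℂ)),
      singMC FC ∩ U ⊆ closure (singLC FC)) :
    ∃ h : ((Fin n → ℂ) × (Fin n → ℂ)) → ℂ, AnalyticAt ℂ h 0 ∧
      -- `h` is non-constant along `M_ℂ`
      (¬ ∃ c : ℂ, ∀ᶠ p in 𝓝 (0 : (Fin n → ℂ) × (Fin n → ℂ)), FC p = 0 → h p = c) ∧
      -- `dh(p) ∧ α(p)` vanishes on pairs of vectors in `T_p M_ℂ`, for `p ∈ M*_ℂ`
      (∀ᶠ p in 𝓝 (0 : (Fin n → ℂ) × (Fin n → ℂ)), FC p = 0 → fderiv ℂ FC p ≠ 0 →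
        ∀ u v : (Fin n → ℂ) × (Fin n → ℂ),
          fderiv ℂ FC p u = 0 → fderiv ℂ FC p v = 0 →
          fderiv ℂ h p u * fderiv ℂ FC p (v.1, 0) -
            fderiv ℂ h p v * fderiv ℂ FC p (u.1, 0) = 0) := by
  obtain ⟨m, rfl⟩ : ∃ m, n = m + 1 := ⟨n - 1, by omega⟩
  have hev := eventually_scaledLevi hF hFeq hHord hLF hFC
  obtain ⟨s, hg, hs0⟩ := (hev.and self_mem_nhdsWithin).exists
  have hs0 : 0 < s := hs0
  have hσ : (s : ℂ) ≠ 0 := by exact_mod_cast hs0.ne'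
  have hnσ : ‖(s : ℂ)‖ = s := by rw [Complex.norm_real, Real.norm_of_nonneg hs0.le]
  obtain ⟨h, hha, ⟨b₀, hb₀, hb₀'⟩, hw⟩ := hg.exists_integral
  have hinl : ∀ p : (Fin (m + 1) → ℂ) × (Fin (m + 1) → ℂ), ‖(s : ℂ)⁻¹ • p.1‖ < 2 →
      HasFDerivAt (fun p : (Fin (m + 1) → ℂ) × (Fin (m + 1) → ℂ) => h ((s : ℂ)⁻¹ • p.1))
        (((s : ℂ)⁻¹ • fderiv ℂ h ((s : ℂ)⁻¹ • p.1)).comp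
          (ContinuousLinearMap.fst ℂ (Fin (m + 1) → ℂ) (Fin (m + 1) → ℂ))) p := by
    intro p hp
    have e1 := hasFDerivAt_scale 1 (s : ℂ)⁻¹ (hha _ (mem_ball_zero_iff.2 hp)).differentiableAt
    simp only [one_smul, one_mul] at e1
    exact HasFDerivAt.comp (f := Prod.fst) (g := fun z : Fin (m + 1) → ℂ => h ((s : ℂ)⁻¹ • z))
      p e1 hasFDerivAt_fst
  refine ⟨fun p => h ((s : ℂ)⁻¹ • p.1), ?_, ?_, ?_⟩
  · refine AnalyticAt.fun_comp (f := fun p : (Fin (m + 1) → ℂ) × (Fin (m + 1) → ℂ) =>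
      (s : ℂ)⁻¹ • p.1) (x := 0) (hha _ ?_) analyticAt_fst.fun_const_smul
    simp
  · rintro ⟨c, hc⟩
    -- every point near `0` lies below a point of `M_ℂ`, so `h` itself is locally constant at `0`
    have h1 : ∀ᶠ z in 𝓝 (0 : Fin (m + 1) → ℂ), h ((s : ℂ)⁻¹ • z) = c := by
      filter_upwards [exists_zero_above hev hc] with z ⟨w, hw0, hP⟩ using hP hw0
    have h2 : h =ᶠ[𝓝 0] fun _ => c := by
      have ht : Tendsto (fun b : Fin (m + 1) → ℂ => (s : ℂ) • b) (𝓝 0) (𝓝 0) := by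
        have := (continuous_const_smul (s : ℂ)).tendsto (0 : Fin (m + 1) → ℂ)
        rwa [smul_zero] at this
      filter_upwards [ht.eventually h1] with b hb
      rwa [inv_smul_smul₀ hσ] at hb
    have h3 := hha.eqOn_of_preconnected_of_eventuallyEq analyticOnNhd_const
      (convex_ball (0 : Fin (m + 1) → ℂ) 2).isPreconnected (by simp) h2
    have h4 : h =ᶠ[𝓝 b₀] fun _ => c := by
      filter_upwards [Metric.isOpen_ball.mem_nhds hb₀] with b hb using h3 hb
    apply hb₀'
    rw [h4.fderiv_eq]
    simp
  · have hA := hFC.1.eventually_analyticAt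
    filter_upwards [hA, Metric.ball_mem_nhds
      (0 : (Fin (m + 1) → ℂ) × (Fin (m + 1) → ℂ)) (ε := s / 8) (by positivity)] with p hpA hp
    intro hp0 _ u v _ _
    rw [mem_ball_zero_iff] at hp
    have hsm : ‖(s : ℂ)⁻¹ • p‖ < 1 / 8 := by
      rw [norm_smul, norm_inv, hnσ, inv_mul_lt_iff₀ hs0]; linarith
    have hb := (norm_fst_le ((s : ℂ)⁻¹ • p)).trans_lt hsm
    have hw' := (norm_snd_le ((s : ℂ)⁻¹ • p)).trans_lt hsm
    have hpp : (s : ℂ) • (s : ℂ)⁻¹ • p = p := smul_inv_smul₀ hσ p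
    have hfd : fderiv ℂ (rescale FC s) ((s : ℂ)⁻¹ • p) =
        (2 / (s : ℂ) ^ (m + 1) * s) • fderiv ℂ FC p := by
      have := (hasFDerivAt_scale (Φ := FC) (2 / (s : ℂ) ^ (m + 1)) (s : ℂ) (p := (s : ℂ)⁻¹ • p)
        (by rw [hpp]; exact hpA.differentiableAt)).fderiv
      rw [hpp] at this
      exact this
    have key := hw ((s : ℂ)⁻¹ • p).1 ((s : ℂ)⁻¹ • p).2 (hb.trans (by norm_num)) hw'
      (by simp only [Prod.mk.eta, rescale, hpp, hp0, smul_zero]) u.1 v.1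
    rw [Prod.mk.eta, hfd] at key
    simp only [smul_apply, smul_eq_mul, Prod.smul_fst] at key
    have hk : (2 / (s : ℂ) ^ (m + 1) * s) ≠ 0 :=
      mul_ne_zero (div_ne_zero two_ne_zero (pow_ne_zero _ hσ)) hσ
    rw [(hinl p (hb.trans (by norm_num))).fderiv]
    simp only [ContinuousLinearMap.comp_apply, smul_apply, smul_eq_mul,
      ContinuousLinearMap.coe_fst']
    refine mul_left_cancel₀ hk ?_
    linear_combination (s : ℂ)⁻¹ * key
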